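/- arXiv:2508.01243 — 3 statements merged into one kernel-verified Lean document; each statement's English description precedes it below -/
import Mathlib

section
/- Let μ1, μ2 ∈ P_2(ℝ^d) and θ ∈ S^{d−1}. Then the set Γ_{θ,1,2}(μ1,μ2) := { ρ_{1,2} : ρ ∈ Γ(μ_θ[μ1,μ2], μ1, μ2) } of (second,third)-bimarginals of admissible 3-plans equals Ω_θ(μ1,μ2), and consequently PS_θ(μ1, μ2) = CW_θ(μ1, μ2). -/
open MeasureTheory Filter Topology ProbabilityTheory
open scoped ENNReal RealInnerProductSpace Classical

noncomputable section

/-- Euclidean space ℝ^d. -/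
abbrev Euc (d : ℕ) : Type := EuclideanSpace ℝ (Fin d)

/-- `P2` : Borel probability measures with finite second moment. -/
def P2 {E : Type*} [NormedAddCommGroup E] [MeasurableSpace E] : Set (Measure E) :=
  {μ | IsProbabilityMeasure μ ∧ Integrable (fun x => ‖x‖ ^ 2) μ}

/-- Couplings between two measures. -/
def Coupling {E F : Type*} [MeasurableSpace E] [MeasurableSpace F]
    (μ : Measure E) (ν : Measure F) : Set (Measure (E × F)) :=
  {π | IsProbabilityMeasure π ∧ π.map Prod.fst = μ ∧ π.map Prod.snd = ν}

/-- Quadratic transport cost of a plan. -/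
def tCost {E : Type*} [NormedAddCommGroup E] [MeasurableSpace E]
    (π : Measure (E × E)) : ℝ :=
  ∫ p, ‖p.1 - p.2‖ ^ 2 ∂π

/-- Squared 2-Wasserstein distance. -/
def W2sq {E : Type*} [NormedAddCommGroup E] [MeasurableSpace E] (μ ν : Measure E) : ℝ :=
  sInf (tCost '' Coupling μ ν)

/-- 2-Wasserstein distance. -/
def W2 {E : Type*} [NormedAddCommGroup E] [MeasurableSpace E] (μ ν : Measure E) : ℝ :=
  Real.sqrt (W2sq μ ν)

/-- Optimal transport plans for the quadratic cost. -/
def OptPlan {E : Type*} [NormedAddCommGroup E] [MeasurableSpace E]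
    (μ ν : Measure E) : Set (Measure (E × E)) :=
  {π | π ∈ Coupling μ ν ∧ tCost π = W2sq μ ν}

/-- `Gamma ν μ1 μ2` : probability measures on `E × E × E` whose (1,2)-marginal is an optimal
plan between `ν` and `μ1` and whose (1,3)-marginal is an optimal plan between `ν` and `μ2`. -/
def Gamma {E : Type*} [NormedAddCommGroup E] [MeasurableSpace E]
    (ν μ1 μ2 : Measure E) : Set (Measure (E × E × E)) :=
  {ρ | IsProbabilityMeasure ρ ∧
    ρ.map (fun p => (p.1, p.2.1)) ∈ OptPlan ν μ1 ∧
    ρ.map (fun p => (p.1, p.2.2)) ∈ OptPlan ν μ2}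

/-- Cost `∫ ‖x1 − x2‖² dρ(y, x1, x2)` of a 3-plan. -/
def pivotCost {E : Type*} [NormedAddCommGroup E] [MeasurableSpace E]
    (ρ : Measure (E × E × E)) : ℝ :=
  ∫ p, ‖p.2.1 - p.2.2‖ ^ 2 ∂ρ

/-- Squared ν-based Wasserstein discrepancy. -/
def Wnusq {E : Type*} [NormedAddCommGroup E] [MeasurableSpace E]
    (ν μ1 μ2 : Measure E) : ℝ :=
  sInf (pivotCost '' Gamma ν μ1 μ2)

/-- ν-based Wasserstein discrepancy. -/
def Wnu {E : Type*} [NormedAddCommGroup E] [MeasurableSpace E]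
    (ν μ1 μ2 : Measure E) : ℝ :=
  Real.sqrt (Wnusq ν μ1 μ2)

/-- Weak convergence of a sequence of measures (against bounded continuous functions). -/
def WeakConv {E : Type*} [MeasurableSpace E] [TopologicalSpace E]
    (μs : ℕ → Measure E) (μ : Measure E) : Prop :=
  ∀ f : BoundedContinuousFunction E ℝ,
    Tendsto (fun n => ∫ x, f x ∂(μs n)) atTop (𝓝 (∫ x, f x ∂μ))

/-- Quantile function (pseudo-inverse c.d.f.) of a measure on ℝ. -/
def quantile (ν : Measure ℝ) (t : ℝ) : ℝ :=
  sInf {s : ℝ | ENNReal.ofReal t ≤ ν (Set.Iic s)}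

/-- Pushforward of `μ` by the projection `P_θ : x ↦ ⟪θ, x⟫`. -/
def projLine {d : ℕ} (θ : Euc d) (μ : Measure (Euc d)) : Measure ℝ :=
  μ.map (fun x => ⟪θ, x⟫)

/-- `μ_θ[μ1, μ2]` : the (unique) Wasserstein mean of `Q_θ#μ1` and `Q_θ#μ2`, given by the
explicit quantile formula `[(½ F_{ν1}^{[-1]} + ½ F_{ν2}^{[-1]})·θ]#L_{[0,1]}`. -/
def pivotMiddle {d : ℕ} (θ : Euc d) (μ1 μ2 : Measure (Euc d)) : Measure (Euc d) :=
  (volume.restrict (Set.Icc (0 : ℝ) 1)).map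
    (fun t => ((1 / 2) * quantile (projLine θ μ1) t
      + (1 / 2) * quantile (projLine θ μ2) t) • θ)

/-- Squared Pivot Sliced discrepancy. -/
def PSsq {d : ℕ} (θ : Euc d) (μ1 μ2 : Measure (Euc d)) : ℝ :=
  Wnusq (pivotMiddle θ μ1 μ2) μ1 μ2

/-- Pivot Sliced discrepancy. -/
def PS {d : ℕ} (θ : Euc d) (μ1 μ2 : Measure (Euc d)) : ℝ :=
  Real.sqrt (PSsq θ μ1 μ2)

/-- `π_θ[μ1, μ2]` : the unique optimal 1D plan between `P_θ#μ1` and `P_θ#μ2`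
(co-monotone quantile coupling). -/
def piTheta {d : ℕ} (θ : Euc d) (μ1 μ2 : Measure (Euc d)) : Measure (ℝ × ℝ) :=
  (volume.restrict (Set.Icc (0 : ℝ) 1)).map
    (fun t => (quantile (projLine θ μ1) t, quantile (projLine θ μ2) t))

/-- `Ω_θ(μ1, μ2)` : couplings of `μ1, μ2` whose projection by `(P_θ, P_θ)` is `π_θ[μ1, μ2]`. -/
def OmegaTheta {d : ℕ} (θ : Euc d) (μ1 μ2 : Measure (Euc d)) :
    Set (Measure (Euc d × Euc d)) :=
  {ω | ω ∈ Coupling μ1 μ2 ∧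
    ω.map (fun p => (⟪θ, p.1⟫, ⟪θ, p.2⟫)) = piTheta θ μ1 μ2}

/-- Squared constrained Wasserstein discrepancy `CW_θ²`. -/
def CWsq {d : ℕ} (θ : Euc d) (μ1 μ2 : Measure (Euc d)) : ℝ :=
  sInf (tCost '' OmegaTheta θ μ1 μ2)

/-- Wasserstein means: minimisers of `μ ↦ W₂²(μ1, μ) + W₂²(μ, μ2)` over `P2`. -/
def WMean {d : ℕ} (μ1 μ2 : Measure (Euc d)) : Set (Measure (Euc d)) :=
  {μ | μ ∈ (P2 : Set (Measure (Euc d))) ∧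
    ∀ μ' ∈ (P2 : Set (Measure (Euc d))),
      W2sq μ1 μ + W2sq μ μ2 ≤ W2sq μ1 μ' + W2sq μ' μ2}

/-- Uniform empirical measure `1/n ∑ δ_{x_i}`. -/
def empMeasure {d n : ℕ} (x : Fin n → Euc d) : Measure (Euc d) :=
  (n : ℝ≥0∞)⁻¹ • ∑ i, Measure.dirac (x i)

/-! Helper lemmas. -/

lemma tangent_aux (f : ℝ → ℝ) (hc : Continuous f) (hm : Monotone f) (z y : ℝ) :
    f z * y - (∫ t in (0:ℝ)..y, f t) ≤ f z * z - ∫ t in (0:ℝ)..z, f t := by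
  have hi : ∀ a b, IntervalIntegrable f volume a b := fun a b => hc.intervalIntegrable a b
  have h1 : (∫ t in (0:ℝ)..y, f t) - (∫ t in (0:ℝ)..z, f t) = ∫ t in z..y, f t :=
    intervalIntegral.integral_interval_sub_left (hi _ _) (hi _ _)
  have h2 : f z * (y - z) ≤ ∫ t in z..y, f t := by
    rcases le_total z y with h | h
    · have := intervalIntegral.integral_mono_on (f := fun _ => f z) (g := f) h
        (by simp) (hi _ _) (fun x hx => hm hx.1)
      simp at this
      linarith
    · have := intervalIntegral.integral_mono_on (f := f) (g := fun _ => f z) h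
        (hi _ _) (by simp) (fun x hx => hm hx.2)
      rw [intervalIntegral.integral_symm]
      simp at this
      linarith
  linarith

lemma deriv_aux (f : ℝ → ℝ) (hc : Continuous f) (x z y : ℝ) (hx : x = f z)
    (hm : Monotone f)
    (h : x * y - (∫ t in (0:ℝ)..y, f t) = f z * z - ∫ t in (0:ℝ)..z, f t) : x = f y := by
  subst hx
  have hmax : IsLocalMax (fun y => f z * y - ∫ t in (0:ℝ)..y, f t) y := by
    refine Filter.Eventually.of_forall fun w => ?_
    simp only
    rw [h]
    exact tangent_aux f hc hm z w
  have hd : HasDerivAt (fun y => f z * y - ∫ t in (0:ℝ)..y, f t) (f z * 1 - f y) y :=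
    ((hasDerivAt_id y).const_mul (f z)).sub (hc.integral_hasStrictDerivAt 0 y).hasDerivAt
  have := hmax.hasDerivAt_eq_zero hd
  linarith

lemma exists_psi (f : ℝ → ℝ) (hc : Continuous f) (hm : Monotone f) :
    ∃ ψ : ℝ → ℝ, Measurable ψ ∧ ∀ z, ψ (f z) = f z * z - ∫ t in (0:ℝ)..z, f t := by
  refine ⟨fun x => ⨆ q : ℚ, (x * (q : ℝ) - ∫ t in (0:ℝ)..(q : ℝ), f t), ?_, ?_⟩
  · exact Measurable.iSup fun q => by fun_prop
  · intro z
    have hφ : Continuous fun y => f z * y - ∫ t in (0:ℝ)..y, f t := by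
      have : Continuous fun y => ∫ t in (0:ℝ)..y, f t :=
        intervalIntegral.continuous_primitive (fun a b => hc.intervalIntegrable a b) 0
      fun_prop
    have hb : BddAbove (Set.range fun q : ℚ => f z * (q : ℝ) - ∫ t in (0:ℝ)..(q : ℝ), f t) :=
      ⟨_, by rintro _ ⟨q, rfl⟩; exact tangent_aux f hc hm z q⟩
    apply le_antisymm
    · exact ciSup_le fun q => tangent_aux f hc hm z q
    · have hcl : IsClosed {y : ℝ | f z * y - (∫ t in (0:ℝ)..y, f t) ≤
          ⨆ q : ℚ, (f z * (q : ℝ) - ∫ t in (0:ℝ)..(q : ℝ), f t)} :=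
        isClosed_le hφ continuous_const
      have hd : Dense (Set.range ((↑) : ℚ → ℝ)) := Rat.denseRange_cast
      have hsub : Set.range ((↑) : ℚ → ℝ) ⊆ {y : ℝ | f z * y - (∫ t in (0:ℝ)..y, f t) ≤
          ⨆ q : ℚ, (f z * (q : ℝ) - ∫ t in (0:ℝ)..(q : ℝ), f t)} := by
        rintro _ ⟨q, rfl⟩
        exact le_ciSup hb q
      exact (hcl.closure_subset_iff.2 hsub) (hd z)

lemma one_dim {Ω : Type*} [MeasurableSpace Ω] (P : Measure Ω) [IsProbabilityMeasure P]
    (X Y : Ω → ℝ) (f : ℝ → ℝ) (hc : Continuous f) (hm : Monotone f)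
    (hX : MemLp X 2 P) (hY : MemLp Y 2 P)
    (hl : IdentDistrib X (fun w => f (Y w)) P P) :
    ∫ w, X w * Y w ∂P ≤ ∫ w, f (Y w) * Y w ∂P ∧
    (∫ w, X w * Y w ∂P = ∫ w, f (Y w) * Y w ∂P → ∀ᵐ w ∂P, X w = f (Y w)) := by
  obtain ⟨ψ, hψ, hψf⟩ := exists_psi f hc hm
  have hfY : MemLp (fun w => f (Y w)) 2 P := hl.memLp_snd hX
  set φ : ℝ → ℝ := fun y => ∫ t in (0:ℝ)..y, f t with hφd
  have hφc : Continuous φ :=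
    intervalIntegral.continuous_primitive (fun a b => hc.intervalIntegrable a b) 0
  have htan : ∀ z y, f z * y - φ y ≤ f z * z - φ z := tangent_aux f hc hm
  have hφ0 : φ 0 = 0 := by simp [hφd]
  have iXY : Integrable (fun w => X w * Y w) P := hX.integrable_mul hY
  have ifY : Integrable (fun w => f (Y w) * Y w) P := hfY.integrable_mul hY
  have iY : Integrable Y P := hY.integrable (by norm_num)
  have iφ : Integrable (fun w => φ (Y w)) P := by
    refine Integrable.mono' (g := fun w => |f 0 * Y w| + |f (Y w) * Y w|)
      ((iY.const_mul (f 0)).abs.add ifY.abs)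
      (hφc.comp_aestronglyMeasurable hY.1) (Eventually.of_forall fun w => ?_)
    have a := htan 0 (Y w)
    have b := htan (Y w) 0
    rw [hφ0] at a b
    rw [Real.norm_eq_abs, abs_le]
    have := neg_abs_le (f 0 * Y w)
    have := le_abs_self (f (Y w) * Y w)
    have := abs_nonneg (f 0 * Y w)
    have := abs_nonneg (f (Y w) * Y w)
    constructor <;> linarith
  have hψl : IdentDistrib (fun w => ψ (X w)) (fun w => ψ (f (Y w))) P P := hl.comp hψ
  have iψ' : Integrable (fun w => ψ (f (Y w))) P := by
    simp only [hψf]; exact ifY.sub iφ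
  have iψ : Integrable (fun w => ψ (X w)) P := hψl.symm.integrable_snd iψ'
  have eψ : ∫ w, ψ (X w) ∂P = ∫ w, f (Y w) * Y w ∂P - ∫ w, φ (Y w) ∂P := by
    rw [hψl.integral_eq]
    simp only [hψf]
    exact integral_sub ifY iφ
  have hr : MeasurableSet (Set.range f) :=
    (isPreconnected_range hc).ordConnected.measurableSet
  have hXr : ∀ᵐ w ∂P, X w ∈ Set.range f :=
    hl.symm.ae_mem_snd hr (Eventually.of_forall fun w => ⟨_, rfl⟩)
  have hnn : 0 ≤ᵐ[P] fun w => φ (Y w) + ψ (X w) - X w * Y w := by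
    filter_upwards [hXr] with w ⟨z, hz⟩
    have := htan z (Y w)
    simp only [Pi.zero_apply]
    rw [← hz, hψf]
    linarith
  have ig : Integrable (fun w => φ (Y w) + ψ (X w) - X w * Y w) P := (iφ.add iψ).sub iXY
  have eg : ∫ w, (φ (Y w) + ψ (X w) - X w * Y w) ∂P
      = ∫ w, f (Y w) * Y w ∂P - ∫ w, X w * Y w ∂P := by
    rw [integral_sub (show Integrable (fun w => φ (Y w) + ψ (X w)) P from iφ.add iψ) iXY, integral_add iφ iψ, eψ]; ring
  refine ⟨?_, fun he => ?_⟩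
  · have := integral_nonneg_of_ae hnn
    linarith
  · have h0 := (integral_eq_zero_iff_of_nonneg_ae hnn ig).1 (by rw [eg, he, sub_self])
    filter_upwards [h0, hXr] with w hw ⟨z, hz⟩
    refine deriv_aux f hc (X w) z (Y w) hz.symm hm ?_
    have : ψ (X w) = f z * z - φ z := by rw [← hz, hψf]
    simp only [Pi.zero_apply] at hw
    change X w * Y w - φ (Y w) = f z * z - φ z
    linarith

lemma quantile_le_iff (ν : Measure ℝ) [IsProbabilityMeasure ν] {t : ℝ} (ht : t ∈ Set.Ioo (0:ℝ) 1)
    (s : ℝ) : quantile ν t ≤ s ↔ ENNReal.ofReal t ≤ ν (Set.Iic s) := by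
  have key : ∀ s, ENNReal.ofReal t ≤ ν (Set.Iic s) ↔ t ≤ cdf ν s := by
    intro s
    rw [← ofReal_cdf, ENNReal.ofReal_le_ofReal_iff (cdf_nonneg ν s)]
  unfold quantile
  simp only [key]
  have hne : {s : ℝ | t ≤ cdf ν s}.Nonempty := by
    obtain ⟨s, hs⟩ := ((tendsto_cdf_atTop ν).eventually (lt_mem_nhds ht.2)).exists
    exact ⟨s, hs.le⟩
  have hbdd : BddBelow {s : ℝ | t ≤ cdf ν s} := by
    obtain ⟨a, ha⟩ := ((tendsto_cdf_atBot ν).eventually (gt_mem_nhds ht.1)).exists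
    refine ⟨a, fun s hs => ?_⟩
    by_contra hlt
    push Not at hlt
    exact absurd ((hs.trans (monotone_cdf ν hlt.le)).trans_lt ha) (lt_irrefl _)
  constructor
  · intro h
    have hr : Tendsto (cdf ν) (𝓝[>] s) (𝓝 (cdf ν s)) :=
      ((cdf ν).right_continuous s).tendsto.mono_left (nhdsWithin_mono _ Set.Ioi_subset_Ici_self)
    refine ge_of_tendsto hr ?_
    filter_upwards [self_mem_nhdsWithin] with u hu
    obtain ⟨v, hv, hvu⟩ := exists_lt_of_csInf_lt hne (h.trans_lt hu)
    exact hv.trans (monotone_cdf ν hvu.le)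
  · intro h
    exact csInf_le hbdd h

lemma quantile_mono (ν : Measure ℝ) [IsProbabilityMeasure ν] :
    MonotoneOn (quantile ν) (Set.Ioo (0:ℝ) 1) := by
  intro s hs t ht hst
  rw [quantile_le_iff ν hs]
  exact (ENNReal.ofReal_le_ofReal hst).trans ((quantile_le_iff ν ht _).1 le_rfl)

lemma restrict_IccIoo : (volume : Measure ℝ).restrict (Set.Icc (0:ℝ) 1)
    = volume.restrict (Set.Ioo (0:ℝ) 1) := Measure.restrict_congr_set Ioo_ae_eq_Icc.symm

lemma quantile_aem (ν : Measure ℝ) [IsProbabilityMeasure ν] :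
    AEMeasurable (quantile ν) (volume.restrict (Set.Ioo (0:ℝ) 1)) :=
  aemeasurable_restrict_of_monotoneOn measurableSet_Ioo (quantile_mono ν)

lemma quantile_map (ν : Measure ℝ) [IsProbabilityMeasure ν] :
    (volume.restrict (Set.Ioo (0:ℝ) 1)).map (quantile ν) = ν := by
  have : IsProbabilityMeasure ((volume : Measure ℝ).restrict (Set.Ioo (0:ℝ) 1)) :=
    ⟨by simp⟩
  have := Measure.isProbabilityMeasure_map (quantile_aem ν)
  refine Measure.ext_of_Iic _ _ fun s => ?_
  rw [Measure.map_apply_of_aemeasurable (quantile_aem ν) measurableSet_Iic]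
  rw [Measure.restrict_apply' measurableSet_Ioo]
  have : quantile ν ⁻¹' Set.Iic s ∩ Set.Ioo 0 1 = Set.Iic (cdf ν s) ∩ Set.Ioo 0 1 := by
    ext t
    simp only [Set.mem_inter_iff, Set.mem_preimage, Set.mem_Iic]
    refine and_congr_left fun ht => ?_
    rw [quantile_le_iff ν ht, ← ofReal_cdf, ENNReal.ofReal_le_ofReal_iff (cdf_nonneg ν s)]
  rw [this, ← Measure.restrict_apply' measurableSet_Ioo,
    Measure.restrict_congr_set (Ioo_ae_eq_Ioc (μ := volume) (a := (0:ℝ)) (b := 1)),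
    Measure.restrict_apply' measurableSet_Ioc, Set.inter_comm, Set.Ioc_inter_Iic,
    Real.volume_Ioc, min_eq_right (cdf_le_one ν s), sub_zero, ofReal_cdf]

lemma exists_lip (q1 q2 : ℝ → ℝ) (S : Set ℝ) (h1 : MonotoneOn q1 S) (h2 : MonotoneOn q2 S) :
    ∃ h : ℝ → ℝ, LipschitzWith 1 h ∧
      ∀ t ∈ S, h ((1/2) * q1 t + (1/2) * q2 t) = (1/2) * q1 t - (1/2) * q2 t := by
  set m : ℝ → ℝ := fun t => (1/2) * q1 t + (1/2) * q2 t with hm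
  set k : ℝ → ℝ := fun t => (1/2) * q1 t - (1/2) * q2 t with hk
  have key : ∀ s ∈ S, ∀ t ∈ S, |k s - k t| ≤ |m s - m t| := by
    intro s hs t ht
    rw [← sq_le_sq]
    have : 0 ≤ (q1 s - q1 t) * (q2 s - q2 t) := by
      rcases le_total s t with h | h
      · exact mul_nonneg_of_nonpos_of_nonpos (sub_nonpos.2 (h1 hs ht h))
          (sub_nonpos.2 (h2 hs ht h))
      · exact mul_nonneg (sub_nonneg.2 (h1 ht hs h)) (sub_nonneg.2 (h2 ht hs h))
    simp only [hm, hk]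
    nlinarith
  have hch : ∀ y : ℝ, ∃ v : ℝ, ∀ t ∈ S, m t = y → k t = v := by
    intro y
    by_cases hy : ∃ t ∈ S, m t = y
    · obtain ⟨t, ht, hty⟩ := hy
      refine ⟨k t, fun s hs hsy => ?_⟩
      have := key s hs t ht
      rw [hsy, hty, sub_self, abs_zero] at this
      exact sub_eq_zero.1 (abs_nonpos_iff.1 this)
    · push Not at hy
      exact ⟨0, fun t ht h => absurd h (hy t ht)⟩
  choose h0 hh0 using hch
  have hL : LipschitzOnWith 1 h0 (m '' S) := by
    refine LipschitzOnWith.of_dist_le_mul ?_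
    rintro _ ⟨s, hs, rfl⟩ _ ⟨t, ht, rfl⟩
    rw [← hh0 _ s hs rfl, ← hh0 _ t ht rfl]
    simpa [Real.dist_eq] using key s hs t ht
  obtain ⟨h, hlip, heq⟩ := hL.extend_real
  refine ⟨h, hlip, fun t ht => ?_⟩
  rw [← heq ⟨t, ht, rfl⟩]
  exact (hh0 _ t ht rfl).symm

lemma lip_mono (h : ℝ → ℝ) (hl : LipschitzWith 1 h) : Monotone (fun y => y + h y) := by
  intro a b hab
  have := hl.dist_le_mul b a
  simp only [Real.dist_eq, NNReal.coe_one, one_mul] at this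
  rw [abs_of_nonneg (sub_nonneg.2 hab)] at this
  have := neg_abs_le (h b - h a)
  simp only
  linarith

lemma exists_coupling {d : ℕ} (θ : Euc d) (ν μ : Measure (Euc d)) [IsProbabilityMeasure ν]
    [IsProbabilityMeasure μ] (f : ℝ → ℝ) (hf : Measurable f)
    (hl : μ.map (fun x => ⟪θ, x⟫) = ν.map (fun y => f ⟪θ, y⟫)) :
    ∃ π ∈ Coupling ν μ, ∀ᵐ p ∂π, ⟪θ, p.2⟫ = f ⟪θ, p.1⟫ := by
  have hP : Measurable (fun x : Euc d => (⟪θ, x⟫ : ℝ)) := by fun_prop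
  have hg : Measurable (fun y : Euc d => f ⟪θ, y⟫) := hf.comp hP
  set κ : Kernel ℝ (Euc d) := condDistrib (fun x : Euc d => x) (fun x : Euc d => (⟪θ, x⟫ : ℝ)) μ
    with hκ
  have hdis : (μ.map (fun x : Euc d => (⟪θ, x⟫ : ℝ))) ⊗ₘ κ
      = μ.map fun x : Euc d => ((⟪θ, x⟫ : ℝ), x) :=
    compProd_map_condDistrib (by fun_prop)
  set π : Measure (Euc d × Euc d) := ν ⊗ₘ (κ.comap _ hg) with hπ
  have hmap : π.map (fun p => (f ⟪θ, p.1⟫, p.2)) = μ.map fun x : Euc d => ((⟪θ, x⟫ : ℝ), x) := by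
    rw [← hdis, hl]
    have hmm : Measurable (fun p : Euc d × Euc d => (f ⟪θ, p.1⟫, p.2)) :=
      (hg.comp measurable_fst).prodMk measurable_snd
    ext s hs
    rw [Measure.map_apply hmm hs, hπ, Measure.compProd_apply (hmm hs), Measure.compProd_apply hs,
      lintegral_map (Kernel.measurable_kernel_prodMk_left hs) hg]
    rfl
  have hmm : Measurable (fun p : Euc d × Euc d => (f ⟪θ, p.1⟫, p.2)) :=
      (hg.comp measurable_fst).prodMk measurable_snd
  refine ⟨π, ⟨inferInstance, ?_, ?_⟩, ?_⟩
  · exact Measure.fst_compProd _ _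
  · have := congrArg (fun m => Measure.map Prod.snd m) hmap
    rw [Measure.map_map measurable_snd hmm, Measure.map_map measurable_snd (by fun_prop)] at this
    simpa [Function.comp_def] using this
  · have hms : MeasurableSet {q : ℝ × Euc d | (⟪θ, q.2⟫ : ℝ) = q.1} :=
      measurableSet_eq_fun (by fun_prop) (by fun_prop)
    have : ∀ᵐ q ∂(π.map (fun p => (f ⟪θ, p.1⟫, p.2))), (⟪θ, q.2⟫ : ℝ) = q.1 := by
      rw [hmap, ae_map_iff (by fun_prop) hms]
      simp
    exact (ae_map_iff hmm.aemeasurable hms).1 this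

lemma memLp_inner {d : ℕ} (θ : Euc d) (μ : Measure (Euc d))
    (h : Integrable (fun x => ‖x‖ ^ 2) μ) : MemLp (fun x : Euc d => (⟪θ, x⟫ : ℝ)) 2 μ := by
  have : MemLp (fun x : Euc d => x) 2 μ :=
    (memLp_two_iff_integrable_sq_norm (by fun_prop)).2 h
  exact this.const_inner θ

lemma tCost_eq {d : ℕ} (θ : Euc d) (ν μ : Measure (Euc d))
    (hν : ν ∈ (P2 : Set (Measure (Euc d)))) (hμ : μ ∈ (P2 : Set (Measure (Euc d))))
    (hs : ∀ᵐ y ∂ν, y = (⟪θ, y⟫ : ℝ) • θ) (π : Measure (Euc d × Euc d)) (hπ : π ∈ Coupling ν μ) :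
    tCost π = ∫ y, ‖y‖ ^ 2 ∂ν + ∫ x, ‖x‖ ^ 2 ∂μ - 2 * ∫ p, (⟪θ, p.2⟫ : ℝ) * ⟪θ, p.1⟫ ∂π := by
  obtain ⟨hp, hf, hg⟩ := hπ
  have hs' : ∀ᵐ p ∂π, p.1 = (⟪θ, p.1⟫ : ℝ) • θ := by
    rw [← hf] at hs
    exact ae_of_ae_map (by fun_prop) hs
  have i1 : Integrable (fun p : Euc d × Euc d => ‖p.1‖ ^ 2) π := by
    have := hν.2
    rw [← hf] at this
    exact this.comp_measurable measurable_fst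
  have i2 : Integrable (fun p : Euc d × Euc d => ‖p.2‖ ^ 2) π := by
    have := hμ.2
    rw [← hg] at this
    exact this.comp_measurable measurable_snd
  have m1 : MemLp (fun p : Euc d × Euc d => (⟪θ, p.1⟫ : ℝ)) 2 π := by
    have := memLp_inner θ ν hν.2
    rw [← hf] at this
    exact this.comp_of_map (by fun_prop)
  have m2 : MemLp (fun p : Euc d × Euc d => (⟪θ, p.2⟫ : ℝ)) 2 π := by
    have := memLp_inner θ μ hμ.2
    rw [← hg] at this
    exact this.comp_of_map (by fun_prop)
  have i3 : Integrable (fun p : Euc d × Euc d => (⟪θ, p.2⟫ : ℝ) * ⟪θ, p.1⟫) π :=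
    m2.integrable_mul m1
  have e1 : ∫ y, ‖y‖ ^ 2 ∂ν = ∫ p, ‖p.1‖ ^ 2 ∂π := by
    rw [← hf, integral_map (by fun_prop) (by fun_prop)]
  have e2 : ∫ y, ‖y‖ ^ 2 ∂μ = ∫ p, ‖p.2‖ ^ 2 ∂π := by
    rw [← hg, integral_map (by fun_prop) (by fun_prop)]
  rw [e1, e2, ← integral_const_mul, ← integral_add i1 i2,
    ← integral_sub (show Integrable (fun p : Euc d × Euc d => ‖p.1‖ ^ 2 + ‖p.2‖ ^ 2) π
      from i1.add i2) (i3.const_mul 2)]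
  unfold tCost
  refine integral_congr_ae ?_
  filter_upwards [hs'] with p hp'
  have : (⟪p.1, p.2⟫ : ℝ) = ⟪θ, p.2⟫ * ⟪θ, p.1⟫ := by
    conv_lhs => rw [hp']
    rw [real_inner_smul_left]; ring
  rw [norm_sub_sq_real, this]
  ring

lemma opt_iff {d : ℕ} (θ : Euc d) (ν μ : Measure (Euc d))
    (hν : ν ∈ (P2 : Set (Measure (Euc d)))) (hμ : μ ∈ (P2 : Set (Measure (Euc d))))
    (hs : ∀ᵐ y ∂ν, y = (⟪θ, y⟫ : ℝ) • θ)
    (f : ℝ → ℝ) (hc : Continuous f) (hm : Monotone f)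
    (hl : μ.map (fun x => ⟪θ, x⟫) = ν.map (fun y => f ⟪θ, y⟫))
    (π : Measure (Euc d × Euc d)) (hπ : π ∈ Coupling ν μ) :
    tCost π = W2sq ν μ ↔ ∀ᵐ p ∂π, ⟪θ, p.2⟫ = f ⟪θ, p.1⟫ := by
  have := hν.1
  have := hμ.1
  have hgm : Measurable (fun y : Euc d => f ⟪θ, y⟫) := hc.measurable.comp (by fun_prop)
  have hval : ∀ π ∈ Coupling ν μ, ∫ p, f ⟪θ, p.1⟫ * (⟪θ, p.1⟫ : ℝ) ∂π
      = ∫ y, f ⟪θ, y⟫ * (⟪θ, y⟫ : ℝ) ∂ν := by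
    rintro π ⟨-, hf, -⟩
    rw [← hf, integral_map (by fun_prop)]
    exact (hgm.mul (by fun_prop)).aestronglyMeasurable
  have hone : ∀ π ∈ Coupling ν μ,
      ∫ p, (⟪θ, p.2⟫ : ℝ) * ⟪θ, p.1⟫ ∂π ≤ ∫ y, f ⟪θ, y⟫ * (⟪θ, y⟫ : ℝ) ∂ν ∧
      (∫ p, (⟪θ, p.2⟫ : ℝ) * ⟪θ, p.1⟫ ∂π = ∫ y, f ⟪θ, y⟫ * (⟪θ, y⟫ : ℝ) ∂ν →
        ∀ᵐ p ∂π, ⟪θ, p.2⟫ = f ⟪θ, p.1⟫) := by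
    intro π hπ
    rw [← hval π hπ]
    obtain ⟨hp, hf, hg⟩ := hπ
    refine one_dim π (fun p => ⟪θ, p.2⟫) (fun p => ⟪θ, p.1⟫) f hc hm ?_ ?_ ⟨?_, ?_, ?_⟩
    · have := memLp_inner θ μ hμ.2
      rw [← hg] at this
      exact this.comp_of_map (by fun_prop)
    · have := memLp_inner θ ν hν.2
      rw [← hf] at this
      exact this.comp_of_map (by fun_prop)
    · fun_prop
    · exact (hgm.comp measurable_fst).aemeasurable
    · rw [← hf, ← hg, Measure.map_map (by fun_prop) measurable_snd,
        Measure.map_map hgm measurable_fst] at hl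
      exact hl
  have hone' : ∀ π ∈ Coupling ν μ, (∀ᵐ p ∂π, ⟪θ, p.2⟫ = f ⟪θ, p.1⟫) →
      ∫ p, (⟪θ, p.2⟫ : ℝ) * ⟪θ, p.1⟫ ∂π = ∫ y, f ⟪θ, y⟫ * (⟪θ, y⟫ : ℝ) ∂ν := by
    intro π hπ h
    rw [← hval π hπ]
    refine integral_congr_ae ?_
    filter_upwards [h] with p hp
    rw [hp]
  obtain ⟨π0, hπ0, h0⟩ := exists_coupling θ ν μ f hc.measurable hl
  have hW : W2sq ν μ = ∫ y, ‖y‖ ^ 2 ∂ν + ∫ x, ‖x‖ ^ 2 ∂μ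
      - 2 * ∫ y, f ⟪θ, y⟫ * (⟪θ, y⟫ : ℝ) ∂ν := by
    refine IsLeast.csInf_eq ⟨⟨π0, hπ0, ?_⟩, ?_⟩
    · rw [tCost_eq θ ν μ hν hμ hs π0 hπ0, hone' π0 hπ0 h0]
    · rintro _ ⟨π', hπ', rfl⟩
      rw [tCost_eq θ ν μ hν hμ hs π' hπ']
      linarith [(hone π' hπ').1]
  rw [hW, tCost_eq θ ν μ hν hμ hs π hπ]
  constructor
  · intro h
    exact (hone π hπ).2 (by linarith)
  · intro h
    rw [hone' π hπ h]

lemma pivotCost_eq {d : ℕ} (ρ : Measure (Euc d × Euc d × Euc d)) :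
    pivotCost ρ = tCost (ρ.map Prod.snd) := by
  unfold pivotCost tCost
  rw [integral_map (by fun_prop) (by fun_prop)]

lemma image_eq {d : ℕ} (θ : Euc d) (hθ : ‖θ‖ = 1) (μ1 μ2 : Measure (Euc d))
    (h1 : μ1 ∈ (P2 : Set (Measure (Euc d)))) (h2 : μ2 ∈ (P2 : Set (Measure (Euc d)))) :
    (fun ρ : Measure (Euc d × Euc d × Euc d) => ρ.map Prod.snd) ''
        Gamma (pivotMiddle θ μ1 μ2) μ1 μ2 = OmegaTheta θ μ1 μ2 := by
  have := h1.1
  have := h2.1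
  have hθθ : (⟪θ, θ⟫ : ℝ) = 1 := by rw [real_inner_self_eq_norm_sq, hθ]; norm_num
  have hP : Measurable (fun x : Euc d => (⟪θ, x⟫ : ℝ)) := by fun_prop
  have hp1 : IsProbabilityMeasure (projLine θ μ1) :=
    Measure.isProbabilityMeasure_map hP.aemeasurable
  have hp2 : IsProbabilityMeasure (projLine θ μ2) :=
    Measure.isProbabilityMeasure_map hP.aemeasurable
  set L : Measure ℝ := volume.restrict (Set.Ioo (0:ℝ) 1) with hL
  have hLp : IsProbabilityMeasure L := ⟨by simp [hL]⟩
  set q1 := quantile (projLine θ μ1) with hq1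
  set q2 := quantile (projLine θ μ2) with hq2
  have a1 : AEMeasurable q1 L := quantile_aem _
  have a2 : AEMeasurable q2 L := quantile_aem _
  have l1 : L.map q1 = μ1.map (fun x => ⟪θ, x⟫) := quantile_map _
  have l2 : L.map q2 = μ2.map (fun x => ⟪θ, x⟫) := quantile_map _
  set m : ℝ → ℝ := fun t => (1/2) * q1 t + (1/2) * q2 t with hm
  have am : AEMeasurable m L := (a1.const_mul _).add (a2.const_mul _)
  set ν := pivotMiddle θ μ1 μ2 with hν
  have eν : ν = L.map (fun t => m t • θ) := by
    rw [hν, pivotMiddle, restrict_IccIoo]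
  have epi : piTheta θ μ1 μ2 = L.map (fun t => (q1 t, q2 t)) := by
    rw [piTheta, restrict_IccIoo]
  obtain ⟨h, hlip, hh⟩ := exists_lip q1 q2 (Set.Ioo (0:ℝ) 1) (quantile_mono _) (quantile_mono _)
  set f : ℝ → ℝ := fun y => y + h y with hf
  set g : ℝ → ℝ := fun y => y + -h y with hg
  have hfm : Monotone f := lip_mono h hlip
  have hgm : Monotone g := lip_mono (fun y => -h y) hlip.neg
  have hfc : Continuous f := continuous_id.add hlip.continuous
  have hgc : Continuous g := continuous_id.add hlip.continuous.neg
  have hae : ∀ᵐ t ∂L, t ∈ Set.Ioo (0:ℝ) 1 := ae_restrict_mem measurableSet_Ioo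
  have hf1 : ∀ᵐ t ∂L, f (m t) = q1 t := by
    filter_upwards [hae] with t ht
    have := hh t ht
    simp only [hf, hm]
    rw [this]; ring
  have hg1 : ∀ᵐ t ∂L, g (m t) = q2 t := by
    filter_upwards [hae] with t ht
    have := hh t ht
    simp only [hg, hm]
    rw [this]; ring
  have amθ : AEMeasurable (fun t => m t • θ) L := am.smul_const θ
  have hνp : IsProbabilityMeasure ν := by
    rw [eν]; exact Measure.isProbabilityMeasure_map amθ
  have hinn : ∀ r : ℝ, (⟪θ, r • θ⟫ : ℝ) = r := by
    intro r; rw [real_inner_smul_right, hθθ, mul_one]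
  have hνm : ∀ {β : Type} [MeasurableSpace β] (k : ℝ → β), Measurable k →
      ν.map (fun y => k ⟪θ, y⟫) = L.map (fun t => k (m t)) := by
    intro β _ k hk
    rw [eν, AEMeasurable.map_map_of_aemeasurable
      (show Measurable (fun y : Euc d => k ⟪θ, y⟫) from hk.comp hP).aemeasurable amθ]
    simp only [Function.comp_def, hinn]
  have hs : ∀ᵐ y ∂ν, y = (⟪θ, y⟫ : ℝ) • θ := by
    rw [eν, ae_map_iff amθ (measurableSet_eq_fun (by fun_prop) (by fun_prop))]
    simp only [hinn]
    simp
  have M1 : MemLp q1 2 L := by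
    have : IdentDistrib (fun x : Euc d => (⟪θ, x⟫ : ℝ)) q1 μ1 L := ⟨hP.aemeasurable, a1, l1.symm⟩
    exact this.memLp_snd (memLp_inner θ μ1 h1.2)
  have M2 : MemLp q2 2 L := by
    have : IdentDistrib (fun x : Euc d => (⟪θ, x⟫ : ℝ)) q2 μ2 L := ⟨hP.aemeasurable, a2, l2.symm⟩
    exact this.memLp_snd (memLp_inner θ μ2 h2.2)
  have Mm : MemLp m 2 L := (M1.const_mul _).add (M2.const_mul _)
  have hν2 : ν ∈ (P2 : Set (Measure (Euc d))) := by
    refine ⟨hνp, ?_⟩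
    rw [eν, integrable_map_measure (by fun_prop) amθ]
    have := (memLp_two_iff_integrable_sq Mm.1).1 Mm
    refine this.congr (Eventually.of_forall fun t => ?_)
    simp [norm_smul, hθ]
  have hl1 : μ1.map (fun x => ⟪θ, x⟫) = ν.map (fun y => f ⟪θ, y⟫) := by
    rw [hνm f hfc.measurable, ← l1]
    exact Measure.map_congr (hf1.mono fun t ht => ht.symm)
  have hl2 : μ2.map (fun x => ⟪θ, x⟫) = ν.map (fun y => g ⟪θ, y⟫) := by
    rw [hνm g hgc.measurable, ← l2]
    exact Measure.map_congr (hg1.mono fun t ht => ht.symm)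
  have O1 := opt_iff θ ν μ1 hν2 h1 hs f hfc hfm hl1
  have O2 := opt_iff θ ν μ2 hν2 h2 hs g hgc hgm hl2
  have mE1 : Measurable (fun p : Euc d × Euc d × Euc d => (p.1, p.2.1)) := by fun_prop
  have mE2 : Measurable (fun p : Euc d × Euc d × Euc d => (p.1, p.2.2)) := by fun_prop
  apply Set.Subset.antisymm
  · rintro _ ⟨ρ, ⟨hρ, ⟨c1, o1⟩, ⟨c2, o2⟩⟩, rfl⟩
    have b1 := ae_of_ae_map mE1.aemeasurable ((O1 _ c1).1 o1)
    have b2 := ae_of_ae_map mE2.aemeasurable ((O2 _ c2).1 o2)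
    obtain ⟨-, c1a, c1b⟩ := c1
    obtain ⟨-, c2a, c2b⟩ := c2
    rw [Measure.map_map (by fun_prop) mE1] at c1a c1b
    rw [Measure.map_map (by fun_prop) mE2] at c2b
    refine ⟨⟨Measure.isProbabilityMeasure_map (by fun_prop), ?_, ?_⟩, ?_⟩
    · simp only
      rw [Measure.map_map (by fun_prop) (by fun_prop)]
      exact c1b
    · simp only
      rw [Measure.map_map (by fun_prop) (by fun_prop)]
      exact c2b
    · simp only
      rw [Measure.map_map (by fun_prop) (by fun_prop), epi]
      have hk : Measurable (fun r : ℝ => (f r, g r)) := hfc.measurable.prodMk hgc.measurable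
      calc _ = ρ.map (fun p => (f ⟪θ, p.1⟫, g ⟪θ, p.1⟫)) := by
            refine Measure.map_congr ?_
            filter_upwards [b1, b2] with p e1 e2
            simp only [Function.comp]
            rw [e1, e2]
        _ = ν.map (fun y => (f ⟪θ, y⟫, g ⟪θ, y⟫)) := by
            rw [← c1a, Measure.map_map
              (show Measurable (fun y : Euc d => (f ⟪θ, y⟫, g ⟪θ, y⟫)) from hk.comp hP) (by fun_prop)]
            rfl
        _ = L.map (fun t => (f (m t), g (m t))) := hνm _ hk
        _ = _ := by
            refine Measure.map_congr ?_
            filter_upwards [hf1, hg1] with t e1 e2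
            rw [e1, e2]
  · rintro ω ⟨⟨hω, w1, w2⟩, hw⟩
    set T : Euc d × Euc d → Euc d × Euc d × Euc d :=
      fun p => (((1/2) * (⟪θ, p.1⟫ : ℝ) + (1/2) * ⟪θ, p.2⟫) • θ, p) with hT
    have mT : Measurable T := by fun_prop
    have mPP : Measurable (fun p : Euc d × Euc d => ((⟪θ, p.1⟫ : ℝ), (⟪θ, p.2⟫ : ℝ))) := by
      fun_prop
    have aqq : AEMeasurable (fun t => (q1 t, q2 t)) L := a1.prodMk a2
    have efst : ω.map (fun p => ((1/2) * (⟪θ, p.1⟫ : ℝ) + (1/2) * ⟪θ, p.2⟫) • θ) = ν := by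
      have mS : Measurable (fun r : ℝ × ℝ => ((1/2) * r.1 + (1/2) * r.2) • θ) := by fun_prop
      have := congrArg (fun M => Measure.map
        (fun r : ℝ × ℝ => ((1/2) * r.1 + (1/2) * r.2) • θ) M) (hw.trans epi)
      rw [Measure.map_map mS mPP, AEMeasurable.map_map_of_aemeasurable mS.aemeasurable aqq] at this
      rw [eν]
      exact this
    have aeq : ∀ (k : ℝ × ℝ → Prop), MeasurableSet {r | k r} → (∀ᵐ t ∂L, k (q1 t, q2 t)) →
        ∀ᵐ p ∂ω, k (⟪θ, p.1⟫, ⟪θ, p.2⟫) := by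
      intro k hk hq
      rw [← ae_map_iff mPP.aemeasurable hk, hw, epi, ae_map_iff aqq hk]
      exact hq
    refine ⟨ω.map T, ⟨Measure.isProbabilityMeasure_map mT.aemeasurable, ?_, ?_⟩, ?_⟩
    · rw [Measure.map_map mE1 mT]
      have mc : Measurable ((fun p : Euc d × Euc d × Euc d => (p.1, p.2.1)) ∘ T) := mE1.comp mT
      have hc : ω.map ((fun p : Euc d × Euc d × Euc d => (p.1, p.2.1)) ∘ T) ∈ Coupling ν μ1 := by
        refine ⟨Measure.isProbabilityMeasure_map mc.aemeasurable, ?_, ?_⟩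
        · rw [Measure.map_map measurable_fst mc]; exact efst
        · rw [Measure.map_map measurable_snd mc]; exact w1
      refine ⟨hc, (O1 _ hc).2 ?_⟩
      have hms : MeasurableSet {p : Euc d × Euc d | (⟪θ, p.2⟫ : ℝ) = f ⟪θ, p.1⟫} :=
        measurableSet_eq_fun (by fun_prop) (hfc.measurable.comp (by fun_prop))
      rw [ae_map_iff mc.aemeasurable hms]
      have := aeq (fun r => r.1 = f ((1/2) * r.1 + (1/2) * r.2))
        (measurableSet_eq_fun (by fun_prop) (hfc.measurable.comp (by fun_prop)))
        (hf1.mono fun t ht => ht.symm)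
      simpa only [hT, Function.comp, hinn] using this
    · rw [Measure.map_map mE2 mT]
      have mc : Measurable ((fun p : Euc d × Euc d × Euc d => (p.1, p.2.2)) ∘ T) := mE2.comp mT
      have hc : ω.map ((fun p : Euc d × Euc d × Euc d => (p.1, p.2.2)) ∘ T) ∈ Coupling ν μ2 := by
        refine ⟨Measure.isProbabilityMeasure_map mc.aemeasurable, ?_, ?_⟩
        · rw [Measure.map_map measurable_fst mc]; exact efst
        · rw [Measure.map_map measurable_snd mc]; exact w2
      refine ⟨hc, (O2 _ hc).2 ?_⟩
      have hms : MeasurableSet {p : Euc d × Euc d | (⟪θ, p.2⟫ : ℝ) = g ⟪θ, p.1⟫} :=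
        measurableSet_eq_fun (by fun_prop) (hgc.measurable.comp (by fun_prop))
      rw [ae_map_iff mc.aemeasurable hms]
      have := aeq (fun r => r.2 = g ((1/2) * r.1 + (1/2) * r.2))
        (measurableSet_eq_fun (by fun_prop) (hgc.measurable.comp (by fun_prop)))
        (hg1.mono fun t ht => ht.symm)
      simpa only [hT, Function.comp, hinn] using this
    · simp only
      rw [Measure.map_map measurable_snd mT]
      exact Measure.map_id

/-- the set of (2,3)-bimarginals of admissible 3-plans based on the pivot
`μ_θ[μ1, μ2]` equals `Ω_θ(μ1, μ2)`, and consequently `PS_θ(μ1, μ2) = CW_θ(μ1, μ2)`. -/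
theorem PS_eq_CW {d : ℕ} (θ : Euc d) (hθ : ‖θ‖ = 1) (μ1 μ2 : Measure (Euc d))
    (h1 : μ1 ∈ (P2 : Set (Measure (Euc d)))) (h2 : μ2 ∈ (P2 : Set (Measure (Euc d)))) :
    ((fun ρ : Measure (Euc d × Euc d × Euc d) => ρ.map Prod.snd) ''
        Gamma (pivotMiddle θ μ1 μ2) μ1 μ2 = OmegaTheta θ μ1 μ2) ∧
    PSsq θ μ1 μ2 = CWsq θ μ1 μ2 := by
  have h := image_eq θ hθ μ1 μ2 h1 h2
  refine ⟨h, ?_⟩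
  unfold PSsq Wnusq CWsq
  rw [← h, Set.image_image]
  simp only [← pivotCost_eq]

end
end

section
/- Let μ1, μ2, μ3 ∈ P_2(ℝ) with μ1 and μ2 atomless, and let ρ be a probability measure on ℝ³ with marginals μ1, μ2, μ3 such that its (1,2)-bimarginal lies in Π*(μ1, μ2) and its (1,3)-bimarginal lies in Π*(μ1, μ3). Then its (2,3)-bimarginal lies in Π*(μ2, μ3). -/
open MeasureTheory Filter Topology ProbabilityTheory
open scoped ENNReal RealInnerProductSpace Classical

noncomputable section

lemma meas_and_le_lt {Ω : Type*} [MeasurableSpace Ω] {f g h k : Ω → ℝ} (hf : Measurable f)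
    (hg : Measurable g) (hh : Measurable h) (hk : Measurable k) :
    MeasurableSet {p | f p ≤ g p ∧ h p < k p} :=
  (measurableSet_le hf hg).inter (measurableSet_lt hh hk)

lemma meas_and_lt_le {Ω : Type*} [MeasurableSpace Ω] {f g h k : Ω → ℝ} (hf : Measurable f)
    (hg : Measurable g) (hh : Measurable h) (hk : Measurable k) :
    MeasurableSet {p | f p < g p ∧ h p ≤ k p} :=
  (measurableSet_lt hf hg).inter (measurableSet_le hh hk)

lemma aux_integrable {μ ν : Measure ℝ} (hμ : μ ∈ (P2 : Set (Measure ℝ))) (hν : ν ∈ (P2 : Set (Measure ℝ)))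
    {π : Measure (ℝ × ℝ)} (hπ : π ∈ Coupling μ ν) :
    Integrable (fun p : ℝ × ℝ => ‖p.1 - p.2‖ ^ 2) π := by
  obtain ⟨hp, h1, h2⟩ := hπ
  have i1 : Integrable (fun p : ℝ × ℝ => ‖p.1‖ ^ 2) π := by
    have := hμ.2
    rw [← h1] at this
    exact this.comp_measurable measurable_fst
  have i2 : Integrable (fun p : ℝ × ℝ => ‖p.2‖ ^ 2) π := by
    have := hν.2
    rw [← h2] at this
    exact this.comp_measurable measurable_snd
  refine Integrable.mono' ((i1.const_mul 2).add (i2.const_mul 2)) ?_ ?_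
  · exact (by fun_prop : Measurable (fun p : ℝ × ℝ => ‖p.1 - p.2‖ ^ 2)).aestronglyMeasurable
  · refine Eventually.of_forall fun p => ?_
    simp only [Pi.add_apply, Real.norm_eq_abs, sq_abs, abs_pow]
    nlinarith [sq_nonneg (p.1 + p.2)]

lemma aux_opt_le {μ ν : Measure ℝ} {π π' : Measure (ℝ × ℝ)} (hπ : π ∈ OptPlan μ ν)
    (h : π' ∈ Coupling μ ν) : tCost π ≤ tCost π' := by
  rw [hπ.2]
  refine csInf_le ⟨0, ?_⟩ ⟨π', h, rfl⟩
  rintro _ ⟨q, _, rfl⟩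
  exact integral_nonneg fun p => by positivity

lemma aux_opt_of_le {μ ν : Measure ℝ} {π : Measure (ℝ × ℝ)} (hπ : π ∈ Coupling μ ν)
    (h : ∀ π' ∈ Coupling μ ν, tCost π ≤ tCost π') : π ∈ OptPlan μ ν := by
  refine ⟨hπ, le_antisymm ?_ ?_⟩
  · refine le_csInf ⟨_, π, hπ, rfl⟩ ?_
    rintro _ ⟨q, hq, rfl⟩
    exact h q hq
  · refine csInf_le ⟨0, ?_⟩ ⟨π, hπ, rfl⟩
    rintro _ ⟨q, _, rfl⟩
    exact integral_nonneg fun p => by positivity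

/-- non-crossing plans -/
def NCross (π : Measure (ℝ × ℝ)) : Prop :=
  ∀ s t : ℝ, π {p | p.1 ≤ s ∧ t < p.2} = 0 ∨ π {p | s < p.1 ∧ p.2 ≤ t} = 0

def swapSet : Set ((ℝ × ℝ) × (ℝ × ℝ)) := {z | (z.1.1 - z.2.1) * (z.1.2 - z.2.2) < 0}

lemma swapSet_meas : MeasurableSet swapSet :=
  measurableSet_lt (by fun_prop) (by fun_prop)

def swapMap (z : (ℝ × ℝ) × (ℝ × ℝ)) : ℝ × ℝ := if z ∈ swapSet then (z.1.1, z.2.2) else z.1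

lemma swapMap_meas : Measurable swapMap :=
  Measurable.ite swapSet_meas (by fun_prop) (by fun_prop)

lemma swap_symm (z : (ℝ × ℝ) × (ℝ × ℝ)) : z.swap ∈ swapSet ↔ z ∈ swapSet := by
  simp only [swapSet, Set.mem_ofPred_eq, Prod.fst_swap, Prod.snd_swap]
  constructor <;> intro h <;> nlinarith

lemma swap_coupling {μ ν : Measure ℝ} {π : Measure (ℝ × ℝ)} (hπ : π ∈ Coupling μ ν) :
    (π.prod π).map swapMap ∈ Coupling μ ν := by
  obtain ⟨hp, h1, h2⟩ := hπ
  refine ⟨Measure.isProbabilityMeasure_map swapMap_meas.aemeasurable, ?_, ?_⟩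
  · rw [Measure.map_map measurable_fst swapMap_meas]
    have : Prod.fst ∘ swapMap = Prod.fst ∘ (Prod.fst : (ℝ × ℝ) × (ℝ × ℝ) → ℝ × ℝ) := by
      ext z; simp only [swapMap, Function.comp]; split_ifs <;> rfl
    rw [this, ← Measure.map_map measurable_fst measurable_fst, Measure.map_fst_prod]
    simp [h1]
  · rw [Measure.map_map measurable_snd swapMap_meas]
    have key : Measure.map (Prod.snd ∘ swapMap) (π.prod π)
        = Measure.map (Prod.snd ∘ (Prod.fst : (ℝ × ℝ) × (ℝ × ℝ) → ℝ × ℝ)) (π.prod π) := by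
      ext B hB
      rw [Measure.map_apply (measurable_snd.comp swapMap_meas) hB,
        Measure.map_apply (measurable_snd.comp measurable_fst) hB]
      rw [← measure_inter_add_sdiff _ swapSet_meas, 
        ← measure_inter_add_sdiff (Prod.snd ∘ Prod.fst ⁻¹' B) swapSet_meas]
      congr 1
      · have : (Prod.snd ∘ swapMap ⁻¹' B) ∩ swapSet
            = Prod.swap ⁻¹' ((Prod.snd ∘ (Prod.fst : (ℝ × ℝ) × (ℝ × ℝ) → ℝ × ℝ) ⁻¹' B) ∩ swapSet) := by
          ext z
          have := swap_symm z
          simp only [Set.mem_inter_iff, Set.mem_preimage, Function.comp, this, swapMap, 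
            Prod.fst_swap]
          constructor
          · rintro ⟨h, hz⟩; rw [if_pos hz] at h; exact ⟨h, hz⟩
          · rintro ⟨h, hz⟩; rw [if_pos hz]; exact ⟨h, hz⟩
        rw [this]
        have hsw : MeasurePreserving Prod.swap (π.prod π) (π.prod π) :=
          Measure.measurePreserving_swap
        exact hsw.measure_preimage
          ((((measurable_snd.comp measurable_fst) hB).inter swapSet_meas).nullMeasurableSet)
      · congr 1
        ext z
        simp only [Set.mem_sdiff, Set.mem_preimage, Function.comp, swapMap]
        constructor
        · rintro ⟨h, hz⟩; rw [if_neg hz] at h; exact ⟨h, hz⟩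
        · rintro ⟨h, hz⟩; rw [if_neg hz]; exact ⟨h, hz⟩
    rw [key, ← Measure.map_map measurable_snd measurable_fst, Measure.map_fst_prod]
    simp [h2]

lemma opt_swapSet {μ ν : Measure ℝ} (hμ : μ ∈ (P2 : Set (Measure ℝ)))
    (hν : ν ∈ (P2 : Set (Measure ℝ))) {π : Measure (ℝ × ℝ)} (hπ : π ∈ OptPlan μ ν) :
    (π.prod π) swapSet = 0 := by
  have hp := hπ.1.1
  have hc' := swap_coupling hπ.1
  have hle := aux_opt_le hπ hc'
  have i0 := aux_integrable hμ hν hπ.1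
  have i0' := aux_integrable hμ hν hc'
  set c : ℝ × ℝ → ℝ := fun p => ‖p.1 - p.2‖ ^ 2 with hc
  have hcm : Measurable c := by fun_prop
  have mp1 : MeasurePreserving Prod.fst (π.prod π) π := measurePreserving_fst
  have hsw : MeasurePreserving Prod.swap (π.prod π) (π.prod π) :=
    Measure.measurePreserving_swap
  have i1 : Integrable (fun z : (ℝ × ℝ) × (ℝ × ℝ) => c z.1) (π.prod π) :=
    mp1.integrable_comp_of_integrable i0
  have i2 : Integrable (fun z : (ℝ × ℝ) × (ℝ × ℝ) => c (swapMap z)) (π.prod π) :=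
    i0'.comp_measurable swapMap_meas
  have e1 : tCost π = ∫ z, c z.1 ∂(π.prod π) := by
    unfold tCost
    rw [← mp1.map_eq, integral_map (by fun_prop) hcm.aestronglyMeasurable, mp1.map_eq]
  have e2 : tCost ((π.prod π).map swapMap) = ∫ z, c (swapMap z) ∂(π.prod π) := by
    unfold tCost
    rw [integral_map swapMap_meas.aemeasurable hcm.aestronglyMeasurable]
  set g : (ℝ × ℝ) × (ℝ × ℝ) → ℝ := fun z => c z.1 - c (swapMap z) with hg
  have ig : Integrable g (π.prod π) := i1.sub i2
  have igs : Integrable (fun z => g z.swap) (π.prod π) := hsw.integrable_comp_of_integrable ig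
  have hgi : ∫ z, g z ∂(π.prod π) ≤ 0 := by
    rw [hg, integral_sub i1 i2, ← e1, ← e2]; linarith
  have hgs : ∫ z, g z.swap ∂(π.prod π) = ∫ z, g z ∂(π.prod π) := 
    integral_prod_swap g
  have hval : ∀ z, z ∈ swapSet → 0 < g z + g z.swap := by
    intro z hz
    have hz' := (swap_symm z).2 hz
    simp only [hg, swapMap, if_pos hz, if_pos hz', hc, Real.norm_eq_abs, sq_abs, Prod.fst_swap, Prod.snd_swap]
    have : (z.1.1 - z.2.1) * (z.1.2 - z.2.2) < 0 := hz
    nlinarith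
  have hval0 : ∀ z, z ∉ swapSet → g z + g z.swap = 0 := by
    intro z hz
    have hz' := fun h => hz ((swap_symm z).1 h)
    simp only [hg, swapMap, if_neg hz, if_neg hz', sub_self, add_zero]
  have hnn : ∀ z, 0 ≤ g z + g z.swap := fun z => by
    by_cases hz : z ∈ swapSet
    · exact (hval z hz).le
    · exact (hval0 z hz).ge
  have hint : ∫ z, (g z + g z.swap) ∂(π.prod π) = 0 := by
    refine le_antisymm ?_ (integral_nonneg hnn)
    rw [integral_add ig igs, hgs]; linarith
  rw [integral_eq_zero_iff_of_nonneg hnn (ig.add igs)] at hint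
  refine measure_mono_null ?_ (ae_iff.1 hint)
  intro z hz
  exact (hval z hz).ne'

lemma opt_ncross {μ ν : Measure ℝ} (hμ : μ ∈ (P2 : Set (Measure ℝ)))
    (hν : ν ∈ (P2 : Set (Measure ℝ))) {π : Measure (ℝ × ℝ)} (hπ : π ∈ OptPlan μ ν) :
    NCross π := by
  intro s t
  have hp := hπ.1.1
  rw [← mul_eq_zero, ← Measure.prod_prod]
  refine measure_mono_null ?_ (opt_swapSet hμ hν hπ)
  rintro ⟨p, q⟩ ⟨⟨h1, h2⟩, ⟨h3, h4⟩⟩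
  simp only [swapSet, Set.mem_ofPred_eq] at *
  nlinarith

lemma real_split {Ω : Type*} [MeasurableSpace Ω] (π : Measure Ω) [IsProbabilityMeasure π]
    {X Y : Ω → ℝ} (hX : Measurable X) (hY : Measurable Y) (s t : ℝ) :
    π.real {p | X p ≤ s} + π.real {p | s < X p ∧ Y p ≤ t}
      = π.real {p | Y p ≤ t} + π.real {p | X p ≤ s ∧ t < Y p} := by
  have mX : MeasurableSet {p | X p ≤ s} := measurableSet_le hX measurable_const
  have mY : MeasurableSet {p | Y p ≤ t} := measurableSet_le hY measurable_const
  have a := measureReal_inter_add_sdiff (μ := π) (s := {p | X p ≤ s}) mY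
  have b := measureReal_inter_add_sdiff (μ := π) (s := {p | Y p ≤ t}) mX
  have e1 : {p | X p ≤ s} \ {p | Y p ≤ t} = {p | X p ≤ s ∧ t < Y p} := by
    ext p; simp
  have e2 : {p | Y p ≤ t} \ {p | X p ≤ s} = {p | s < X p ∧ Y p ≤ t} := by
    ext p; simp [and_comm]
  rw [e1] at a
  rw [e2, Set.inter_comm] at b
  linarith

lemma marg_real {μ ν : Measure ℝ} {π : Measure (ℝ × ℝ)} (hπ : π ∈ Coupling μ ν) (s : ℝ) :
    π.real {p | p.1 ≤ s} = μ.real (Set.Iic s) ∧ π.real {p | p.2 ≤ s} = ν.real (Set.Iic s) := by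
  obtain ⟨_, h1, h2⟩ := hπ
  constructor
  · rw [← h1, map_measureReal_apply measurable_fst measurableSet_Iic]; rfl
  · rw [← h2, map_measureReal_apply measurable_snd measurableSet_Iic]; rfl

lemma ncross_le {μ ν : Measure ℝ} {π π' : Measure (ℝ × ℝ)} (hπ : π ∈ Coupling μ ν)
    (hπ' : π' ∈ Coupling μ ν) (h : NCross π) (s t : ℝ) :
    π {p | p.1 ≤ s ∧ t < p.2} ≤ π' {p | p.1 ≤ s ∧ t < p.2} ∧
    π {p | s < p.1 ∧ p.2 ≤ t} ≤ π' {p | s < p.1 ∧ p.2 ≤ t} := by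
  have hp := hπ.1
  have hp' := hπ'.1
  have a := real_split π measurable_fst measurable_snd s t
  have b := real_split π' measurable_fst measurable_snd s t
  rw [(marg_real hπ s).1, (marg_real hπ t).2] at a
  rw [(marg_real hπ' s).1, (marg_real hπ' t).2] at b
  rw [← ENNReal.toReal_le_toReal (measure_ne_top _ _) (measure_ne_top _ _),
    ← ENNReal.toReal_le_toReal (measure_ne_top _ _) (measure_ne_top _ _)]
  change π.real _ ≤ π'.real _ ∧ π.real _ ≤ π'.real _
  have n1 : 0 ≤ π'.real {p | p.1 ≤ s ∧ t < p.2} := measureReal_nonneg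
  have n2 : 0 ≤ π'.real {p | s < p.1 ∧ p.2 ≤ t} := measureReal_nonneg
  rcases h s t with h | h
  · have h : π.real {p | p.1 ≤ s ∧ t < p.2} = 0 := by simp [Measure.real, h]
    constructor <;> linarith
  · have h : π.real {p | s < p.1 ∧ p.2 ≤ t} = 0 := by simp [Measure.real, h]
    constructor <;> linarith

lemma layer (p : ℝ × ℝ) : ENNReal.ofReal (‖p.1 - p.2‖ ^ 2) =
    ∫⁻ z : ℝ × ℝ, ({q : (ℝ × ℝ) × (ℝ × ℝ) | q.1.1 ≤ min q.2.1 q.2.2 ∧ max q.2.1 q.2.2 < q.1.2}.indicator 1 (p, z)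
      + {q : (ℝ × ℝ) × (ℝ × ℝ) | max q.2.1 q.2.2 < q.1.1 ∧ q.1.2 ≤ min q.2.1 q.2.2}.indicator 1 (p, z)) := by
  have e1 : ∀ z : ℝ × ℝ, {q : (ℝ × ℝ) × (ℝ × ℝ) | q.1.1 ≤ min q.2.1 q.2.2 ∧ max q.2.1 q.2.2 < q.1.2}.indicator (1 : (ℝ × ℝ) × (ℝ × ℝ) → ℝ≥0∞) (p, z) = (Set.Ico p.1 p.2 ×ˢ Set.Ico p.1 p.2).indicator 1 z := by
    intro z
    simp only [Set.indicator_apply, Set.mem_ofPred_eq, Set.mem_prod, Set.mem_Ico, le_min_iff, max_lt_iff, Pi.one_apply]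
    congr 1
    apply propext; tauto
  have e2 : ∀ z : ℝ × ℝ, {q : (ℝ × ℝ) × (ℝ × ℝ) | max q.2.1 q.2.2 < q.1.1 ∧ q.1.2 ≤ min q.2.1 q.2.2}.indicator (1 : (ℝ × ℝ) × (ℝ × ℝ) → ℝ≥0∞) (p, z) = (Set.Ico p.2 p.1 ×ˢ Set.Ico p.2 p.1).indicator 1 z := by
    intro z
    simp only [Set.indicator_apply, Set.mem_ofPred_eq, Set.mem_prod, Set.mem_Ico, le_min_iff, max_lt_iff, Pi.one_apply]
    congr 1
    apply propext; tauto
  simp_rw [e1, e2]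
  have m : ∀ a b : ℝ, MeasurableSet (Set.Ico a b ×ˢ Set.Ico a b) := fun a b =>
    measurableSet_Ico.prod measurableSet_Ico
  rw [lintegral_add_left (measurable_one.indicator (m _ _)), lintegral_indicator_one (m _ _),
    lintegral_indicator_one (m _ _), Measure.volume_eq_prod, Measure.prod_prod, Measure.prod_prod]
  simp only [Real.volume_Ico, Real.norm_eq_abs, sq_abs]
  rcases le_total p.1 p.2 with h | h
  · rw [ENNReal.ofReal_of_nonpos (sub_nonpos.2 h), ← ENNReal.ofReal_mul (sub_nonneg.2 h)]
    simp only [mul_zero, add_zero]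
    congr 1; ring
  · rw [ENNReal.ofReal_of_nonpos (sub_nonpos.2 h), ← ENNReal.ofReal_mul (sub_nonneg.2 h)]
    simp only [mul_zero, zero_add]
    congr 1; ring

lemma cost_formula (π : Measure (ℝ × ℝ)) [IsProbabilityMeasure π] :
    ∫⁻ p, ENNReal.ofReal (‖p.1 - p.2‖ ^ 2) ∂π =
    ∫⁻ z : ℝ × ℝ, (π {p | p.1 ≤ min z.1 z.2 ∧ max z.1 z.2 < p.2}
      + π {p | max z.1 z.2 < p.1 ∧ p.2 ≤ min z.1 z.2}) := by
  simp_rw [layer]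
  have m1 : MeasurableSet {q : (ℝ × ℝ) × (ℝ × ℝ) | q.1.1 ≤ min q.2.1 q.2.2 ∧ max q.2.1 q.2.2 < q.1.2} :=
    meas_and_le_lt (by fun_prop) (by fun_prop) (by fun_prop) (by fun_prop)
  have m2 : MeasurableSet {q : (ℝ × ℝ) × (ℝ × ℝ) | max q.2.1 q.2.2 < q.1.1 ∧ q.1.2 ≤ min q.2.1 q.2.2} :=
    meas_and_lt_le (by fun_prop) (by fun_prop) (by fun_prop) (by fun_prop)
  have f1 : Measurable ({q : (ℝ × ℝ) × (ℝ × ℝ) | q.1.1 ≤ min q.2.1 q.2.2 ∧ max q.2.1 q.2.2 < q.1.2}.indicator (1 : (ℝ × ℝ) × (ℝ × ℝ) → ℝ≥0∞)) := measurable_one.indicator m1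
  have f2 : Measurable ({q : (ℝ × ℝ) × (ℝ × ℝ) | max q.2.1 q.2.2 < q.1.1 ∧ q.1.2 ≤ min q.2.1 q.2.2}.indicator (1 : (ℝ × ℝ) × (ℝ × ℝ) → ℝ≥0∞)) := measurable_one.indicator m2
  rw [lintegral_lintegral_swap]
  · refine lintegral_congr fun z => ?_
    refine (lintegral_add_left (f1.comp (measurable_prodMk_right (y := z))) _).trans ?_
    have n1 := measurable_prodMk_right (y := z) m1
    have n2 := measurable_prodMk_right (y := z) m2
    congr 1
    · exact lintegral_indicator_one n1
    · exact lintegral_indicator_one n2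
  · exact (f1.add f2).aemeasurable

lemma ncross_opt {μ ν : Measure ℝ} (hμ : μ ∈ (P2 : Set (Measure ℝ)))
    (hν : ν ∈ (P2 : Set (Measure ℝ))) {π : Measure (ℝ × ℝ)} (hπ : π ∈ Coupling μ ν)
    (h : NCross π) : π ∈ OptPlan μ ν := by
  refine aux_opt_of_le hπ fun π' hπ' => ?_
  have hp := hπ.1
  have hp' := hπ'.1
  have i := aux_integrable hμ hν hπ
  have i' := aux_integrable hμ hν hπ'
  have nn : ∀ p : ℝ × ℝ, 0 ≤ ‖p.1 - p.2‖ ^ 2 := fun p => by positivity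
  unfold tCost
  rw [← ENNReal.ofReal_le_ofReal_iff (integral_nonneg nn),
    ofReal_integral_eq_lintegral_ofReal i (Eventually.of_forall nn),
    ofReal_integral_eq_lintegral_ofReal i' (Eventually.of_forall nn), cost_formula, cost_formula]
  refine lintegral_mono fun z => ?_
  exact add_le_add (ncross_le hπ hπ' h _ _).1 (ncross_le hπ hπ' h _ _).2

lemma exists_cdf_eq (μ : Measure ℝ) [IsProbabilityMeasure μ] (ha : ∀ x : ℝ, μ {x} = 0)
    {c : ℝ} (h0 : 0 < c) (h1 : c < 1) : ∃ a, μ.real (Set.Iic a) = c := by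
  have hcont : Continuous (cdf μ) := by
    rw [continuous_iff_continuousAt]
    intro x
    rw [(monotone_cdf μ).continuousAt_iff_leftLim_eq_rightLim, StieltjesFunction.rightLim_eq]
    have := StieltjesFunction.measure_singleton (cdf μ) x
    rw [measure_cdf, ha] at this
    have h := ENNReal.ofReal_eq_zero.1 this.symm
    exact le_antisymm ((monotone_cdf μ).leftLim_le le_rfl) (by linarith)
  obtain ⟨l, hl⟩ := ((tendsto_cdf_atBot μ).eventually (gt_mem_nhds h0)).exists
  obtain ⟨u, hu⟩ := ((tendsto_cdf_atTop μ).eventually (lt_mem_nhds h1)).exists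
  obtain ⟨a, ha⟩ := mem_range_of_exists_le_of_exists_ge hcont ⟨l, hl.le⟩ ⟨u, hu.le⟩
  exact ⟨a, by rw [← cdf_eq_real, ha]⟩

/-- for one-dimensional measures `μ1, μ2, μ3` with `μ1, μ2` atomless, a
3-plan whose (1,2)- and (1,3)-bimarginals are optimal has optimal (2,3)-bimarginal. -/
theorem bimarginals_1d_optimal (μ1 μ2 μ3 : Measure ℝ)
    (h1 : μ1 ∈ (P2 : Set (Measure ℝ))) (h2 : μ2 ∈ (P2 : Set (Measure ℝ)))
    (h3 : μ3 ∈ (P2 : Set (Measure ℝ)))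
    (h1a : ∀ x : ℝ, μ1 {x} = 0) (h2a : ∀ x : ℝ, μ2 {x} = 0)
    (ρ : Measure (ℝ × ℝ × ℝ)) (hρ : IsProbabilityMeasure ρ)
    (hm1 : ρ.map (fun p => p.1) = μ1)
    (hm2 : ρ.map (fun p => p.2.1) = μ2)
    (hm3 : ρ.map (fun p => p.2.2) = μ3)
    (h12 : ρ.map (fun p => (p.1, p.2.1)) ∈ OptPlan μ1 μ2)
    (h13 : ρ.map (fun p => (p.1, p.2.2)) ∈ OptPlan μ1 μ3) :
    ρ.map (fun p => (p.2.1, p.2.2)) ∈ OptPlan μ2 μ3 := by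
  have mX : Measurable (fun p : ℝ × ℝ × ℝ => p.1) := by fun_prop
  have mY : Measurable (fun p : ℝ × ℝ × ℝ => p.2.1) := by fun_prop
  have mZ : Measurable (fun p : ℝ × ℝ × ℝ => p.2.2) := by fun_prop
  have hp1 := h1.1
  have n12 := opt_ncross h1 h2 h12
  have n13 := opt_ncross h1 h3 h13
  have mA : ∀ s t : ℝ, MeasurableSet {p : ℝ × ℝ | p.1 ≤ s ∧ t < p.2} := fun s t =>
    meas_and_le_lt (by fun_prop) (by fun_prop) (by fun_prop) (by fun_prop)
  have mB : ∀ s t : ℝ, MeasurableSet {p : ℝ × ℝ | s < p.1 ∧ p.2 ≤ t} := fun s t =>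
    meas_and_lt_le (by fun_prop) (by fun_prop) (by fun_prop) (by fun_prop)
  have hc : ρ.map (fun p => (p.2.1, p.2.2)) ∈ Coupling μ2 μ3 := by
    refine ⟨Measure.isProbabilityMeasure_map (by fun_prop), ?_, ?_⟩
    · rw [Measure.map_map measurable_fst (by fun_prop)]; exact hm2
    · rw [Measure.map_map measurable_snd (by fun_prop)]; exact hm3
  refine ncross_opt h2 h3 hc fun s t => ?_
  rw [Measure.map_apply (by fun_prop) (mA _ _), Measure.map_apply (by fun_prop) (mB _ _)]
  by_contra! hcon
  obtain ⟨hA, hB⟩ := hcon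
  simp only [Set.preimage_ofPred_eq] at hA hB
  have pA : 0 < ρ.real {p | p.2.1 ≤ s ∧ t < p.2.2} := ENNReal.toReal_pos hA (measure_ne_top _ _)
  have pB : 0 < ρ.real {p | s < p.2.1 ∧ p.2.2 ≤ t} := ENNReal.toReal_pos hB (measure_ne_top _ _)
  have c0 : 0 < ρ.real {p | p.2.1 ≤ s} := pA.trans_le (measureReal_mono fun p hp => hp.1)
  have c1 : ρ.real {p | p.2.1 ≤ s} < 1 := by
    have m : MeasurableSet {p : ℝ × ℝ × ℝ | p.2.1 ≤ s} := measurableSet_le mY measurable_const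
    have := probReal_compl_eq_one_sub (μ := ρ) m
    have : ρ.real {p | s < p.2.1 ∧ p.2.2 ≤ t} ≤ ρ.real {p : ℝ × ℝ × ℝ | p.2.1 ≤ s}ᶜ :=
      measureReal_mono fun p hp => not_le.2 hp.1
    linarith
  obtain ⟨a, ha⟩ := exists_cdf_eq μ1 h1a c0 c1
  have ha' : ρ.real {p | p.1 ≤ a} = ρ.real {p | p.2.1 ≤ s} := by
    rw [← ha, ← hm1, map_measureReal_apply mX measurableSet_Iic]; rfl
  have sp := real_split ρ mX mY a s
  have z : ρ {p | p.1 ≤ a ∧ s < p.2.1} = 0 ∧ ρ {p | a < p.1 ∧ p.2.1 ≤ s} = 0 := by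
    have q := n12 a s
    rw [Measure.map_apply (by fun_prop) (mA _ _), Measure.map_apply (by fun_prop) (mB _ _)] at q
    simp only [Set.preimage_ofPred_eq] at q
    rw [← measureReal_eq_zero_iff, ← measureReal_eq_zero_iff] at q ⊢
    rcases q with q | q
    · exact ⟨q, by linarith⟩
    · exact ⟨by linarith, q⟩
  have q := n13 a t
  rw [Measure.map_apply (by fun_prop) (mA _ _), Measure.map_apply (by fun_prop) (mB _ _)] at q
  simp only [Set.preimage_ofPred_eq] at q
  rcases q with q | q
  · refine hA (measure_mono_null ?_ (measure_union_null q z.2))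
    rintro p ⟨u, v⟩
    rcases le_or_gt p.1 a with h | h
    · exact Or.inl ⟨h, v⟩
    · exact Or.inr ⟨h, u⟩
  · refine hB (measure_mono_null ?_ (measure_union_null q z.1))
    rintro p ⟨u, v⟩
    rcases le_or_gt p.1 a with h | h
    · exact Or.inr ⟨h, u⟩
    · exact Or.inl ⟨h, v⟩
end
end

section
/- Let x_1,…,x_n ∈ ℝ^d, y_1,…,y_n ∈ ℝ^d and θ ∈ S^{d−1} be such that the families (P_θ x_i)_{i=1}^n and (P_θ y_i)_{i=1}^n are injective. Let σ_θ and τ_θ be the unique permutations of {1,…,n} sorting (P_θ x_i)_i and (P_θ y_i)_i increasingly. Then for μ1 = (1/n)Σ_i δ_{x_i} and μ2 = (1/n)Σ_i δ_{y_i}, PS_θ²(μ1, μ2) = (1/n) Σ_{i=1}^n ‖x_{σ_θ(i)} − y_{τ_θ(i)}‖². -/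
open MeasureTheory Filter Topology ProbabilityTheory
open scoped ENNReal RealInnerProductSpace Classical

noncomputable section

lemma aux_map_step {E : Type*} [MeasurableSpace E] {n : ℕ} (hn : 0 < n)
    (f : ℝ → E) (w : Fin n → E)
    (h : ∀ i : Fin n, ∀ t ∈ Set.Ioc ((i : ℝ) / n) (((i : ℝ) + 1) / n), f t = w i) :
    (volume.restrict (Set.Icc (0 : ℝ) 1)).map f
      = (n : ℝ≥0∞)⁻¹ • ∑ i, Measure.dirac (w i) := by
  have hn' : (0 : ℝ) < n := by exact_mod_cast hn
  have hU : (⋃ i : Fin n, Set.Ioc ((i : ℝ) / n) (((i : ℝ) + 1) / n)) = Set.Ioc (0 : ℝ) 1 := by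
    ext t
    simp only [Set.mem_iUnion, Set.mem_Ioc]
    constructor
    · rintro ⟨i, h1, h2⟩
      have hi : ((i : ℕ) : ℝ) + 1 ≤ n := by exact_mod_cast i.2
      refine ⟨lt_of_le_of_lt (by positivity) h1, h2.trans ?_⟩
      rw [div_le_one hn']; exact hi
    · rintro ⟨h1, h2⟩
      have hpos : 0 < t * n := by positivity
      have hc : 0 < ⌈t * n⌉₊ := Nat.ceil_pos.2 hpos
      have hc2 : ⌈t * n⌉₊ ≤ n := Nat.ceil_le.2 (by nlinarith)
      refine ⟨⟨⌈t * n⌉₊ - 1, by omega⟩, ?_, ?_⟩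
      · rw [div_lt_iff₀ hn']
        show ((⌈t * n⌉₊ - 1 : ℕ) : ℝ) < t * n
        have := Nat.ceil_lt_add_one hpos.le
        rw [Nat.cast_sub (by omega)]; push_cast; linarith
      · rw [le_div_iff₀ hn']
        show t * n ≤ ((⌈t * n⌉₊ - 1 : ℕ) : ℝ) + 1
        have := Nat.le_ceil (t * n)
        rw [Nat.cast_sub (by omega)]; push_cast; linarith
  have hd : Pairwise (Function.onFun Disjoint
      (fun i : Fin n => Set.Ioc ((i : ℝ) / n) (((i : ℝ) + 1) / n))) := by
    intro i j hij
    rw [Function.onFun, Set.disjoint_left]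
    rintro t ⟨h1, h2⟩ ⟨h3, h4⟩
    have a := (div_lt_div_iff_of_pos_right hn').1 (h1.trans_le h4)
    have b := (div_lt_div_iff_of_pos_right hn').1 (h3.trans_le h2)
    have a' : (i : ℕ) < j + 1 := by exact_mod_cast a
    have b' : (j : ℕ) < i + 1 := by exact_mod_cast b
    exact hij (Fin.ext (by omega))
  have hs : volume.restrict (Set.Icc (0 : ℝ) 1)
      = ∑ i : Fin n, volume.restrict (Set.Ioc ((i : ℝ) / n) (((i : ℝ) + 1) / n)) := by
    rw [← Measure.restrict_congr_set (Ioc_ae_eq_Icc (α := ℝ) (μ := volume)),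
      ← Measure.sum_fintype, ← Measure.restrict_iUnion hd (fun i => measurableSet_Ioc), hU]
  have hc : ∀ i : Fin n, f =ᵐ[volume.restrict (Set.Ioc ((i : ℝ) / n) (((i : ℝ) + 1) / n))]
      fun _ => w i := fun i =>
    (ae_restrict_iff' measurableSet_Ioc).2 (Eventually.of_forall (h i))
  have hm : ∀ i : Fin n,
      AEMeasurable f (volume.restrict (Set.Ioc ((i : ℝ) / n) (((i : ℝ) + 1) / n))) :=
    fun i => aemeasurable_const.congr (hc i).symm
  have hf : AEMeasurable f (volume.restrict (Set.Icc (0 : ℝ) 1)) := by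
    rw [hs, ← Measure.sum_fintype]
    exact aemeasurable_sum_measure_iff.2 hm
  ext s hsm
  rw [Measure.map_apply_of_aemeasurable hf hsm, hs, Measure.finset_sum_apply, Measure.smul_apply,
    Measure.finset_sum_apply, smul_eq_mul, Finset.mul_sum]
  refine Finset.sum_congr rfl fun i _ => ?_
  rw [← Measure.map_apply_of_aemeasurable (hm i) hsm, Measure.map_congr (hc i), Measure.map_const,
    Measure.smul_apply, smul_eq_mul]
  congr 1
  rw [Measure.restrict_apply_univ, Real.volume_Ioc]
  have : ((i : ℝ) + 1) / n - (i : ℝ) / n = (n : ℝ)⁻¹ := by field_simp; ring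
  rw [this, ENNReal.ofReal_inv_of_pos hn', ENNReal.ofReal_natCast]

lemma aux_emp_perm {d n : ℕ} (x : Fin n → Euc d) (σ : Equiv.Perm (Fin n)) :
    empMeasure (fun i => x (σ i)) = empMeasure x := by
  unfold empMeasure
  rw [Equiv.sum_comp σ (fun i => Measure.dirac (x i))]

lemma aux_emp_prob {d n : ℕ} (hn : 0 < n) (x : Fin n → Euc d) :
    IsProbabilityMeasure (empMeasure x) := by
  constructor
  have : (n : ℝ≥0∞) ≠ 0 := by exact_mod_cast hn.ne'
  simp [empMeasure, ENNReal.inv_mul_cancel this (ENNReal.natCast_ne_top n)]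

lemma aux_ae_sum {α : Type*} [MeasurableSpace α] [MeasurableSingletonClass α] {n : ℕ}
    (c : ℝ≥0∞) (a : Fin n → α) (p : α → Prop) (h : ∀ i, p (a i)) :
    ∀ᵐ z ∂(c • ∑ i, Measure.dirac (a i)), p z := by
  apply Measure.ae_smul_measure
  rw [← Measure.sum_fintype, Measure.ae_sum_iff]
  intro i
  rw [ae_dirac_eq]
  exact h i

lemma aux_integrable_s13 {α : Type*} [MeasurableSpace α] [MeasurableSingletonClass α]
    (μ : Measure α) [IsFiniteMeasure μ] (s : Set α) (hs : s.Finite) (h : ∀ᵐ z ∂μ, z ∈ s)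
    (f : α → ℝ) : Integrable f μ := by
  rw [← Measure.restrict_eq_self_of_ae_mem h]
  exact IntegrableOn.of_finite hs

lemma aux_integral {α : Type*} [MeasurableSpace α] [MeasurableSingletonClass α] {n : ℕ}
    (a : Fin n → α) (f : α → ℝ) :
    ∫ z, f z ∂((n : ℝ≥0∞)⁻¹ • ∑ i, Measure.dirac (a i)) = (1 / (n : ℝ)) * ∑ i, f (a i) := by
  rw [integral_smul_measure, integral_finset_sum_measure]
  · simp [integral_dirac]
  · intro i _
    exact aux_integrable_s13 _ {a i} (Set.finite_singleton _) (by rw [ae_dirac_eq]; rfl) f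

lemma aux_quantile {n : ℕ} (hn : 0 < n) (u : Fin n → ℝ) (hu : StrictMono u) (k : Fin n) (t : ℝ)
    (ht : t ∈ Set.Ioc ((k : ℝ) / n) (((k : ℝ) + 1) / n)) :
    quantile ((n : ℝ≥0∞)⁻¹ • ∑ i, Measure.dirac (u i)) t = u k := by
  have hn' : (0 : ℝ) < n := by exact_mod_cast hn
  have hval : ∀ s, ((n : ℝ≥0∞)⁻¹ • ∑ i, Measure.dirac (u i)) (Set.Iic s)
      = ENNReal.ofReal (((Finset.univ.filter fun i => u i ≤ s).card : ℝ) / n) := by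
    intro s
    rw [Measure.smul_apply, Measure.finset_sum_apply, smul_eq_mul,
      ENNReal.ofReal_div_of_pos hn', ENNReal.ofReal_natCast, ENNReal.ofReal_natCast,
      ENNReal.div_eq_inv_mul]
    congr 1
    rw [Finset.card_filter]
    push_cast
    refine Finset.sum_congr rfl fun i _ => ?_
    simp [Measure.dirac_apply' _ measurableSet_Iic, Set.indicator_apply]
  have : {s : ℝ | ENNReal.ofReal t ≤ ((n : ℝ≥0∞)⁻¹ • ∑ i, Measure.dirac (u i)) (Set.Iic s)}
      = Set.Ici (u k) := by
    ext s
    rw [Set.mem_setOf_eq, hval, ENNReal.ofReal_le_ofReal_iff (by positivity), Set.mem_Ici]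
    constructor
    · intro h
      by_contra hlt
      push Not at hlt
      have hsub : (Finset.univ.filter fun i => u i ≤ s) ⊆ Finset.Iio k := by
        intro i hi
        rw [Finset.mem_filter] at hi
        exact Finset.mem_Iio.2 (hu.lt_iff_lt.1 (hi.2.trans_lt hlt))
      have hcard := Finset.card_le_card hsub
      rw [Fin.card_Iio] at hcard
      have h2 := (div_lt_div_iff_of_pos_right hn').1 (ht.1.trans_le h)
      have h3 : (k : ℕ) < (Finset.univ.filter fun i => u i ≤ s).card := by exact_mod_cast h2
      omega
    · intro h
      have hsub : Finset.Iic k ⊆ (Finset.univ.filter fun i => u i ≤ s) := by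
        intro i hi
        rw [Finset.mem_filter]
        exact ⟨Finset.mem_univ _, (hu.monotone (Finset.mem_Iic.1 hi)).trans h⟩
      have hcard := Finset.card_le_card hsub
      rw [Fin.card_Iic] at hcard
      refine ht.2.trans ?_
      rw [div_le_div_iff_of_pos_right hn']
      exact_mod_cast hcard
  rw [quantile, this, csInf_Ici]

lemma aux_projLine {d n : ℕ} (θ : Euc d) (x : Fin n → Euc d) :
    projLine θ (empMeasure x) = (n : ℝ≥0∞)⁻¹ • ∑ i, Measure.dirac (⟪θ, x i⟫ : ℝ) := by
  have hm : Measurable (fun z : Euc d => (⟪θ, z⟫ : ℝ)) := by fun_prop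
  ext s hs
  simp [projLine, empMeasure, Measure.map_apply hm hs, Measure.dirac_apply' _ hs,
    Measure.dirac_apply' _ (hm hs), Set.indicator_apply]

lemma aux_pivot {d n : ℕ} (hn : 0 < n) (θ : Euc d) (x y : Fin n → Euc d)
    (hx : StrictMono fun i => (⟪θ, x i⟫ : ℝ)) (hy : StrictMono fun i => (⟪θ, y i⟫ : ℝ)) :
    pivotMiddle θ (empMeasure x) (empMeasure y)
      = empMeasure (fun i => ((1 / 2) * (⟪θ, x i⟫ : ℝ) + (1 / 2) * (⟪θ, y i⟫ : ℝ)) • θ) := by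
  unfold pivotMiddle
  rw [aux_projLine, aux_projLine]
  refine aux_map_step hn _ _ fun i t ht => ?_
  rw [aux_quantile hn _ hx i t ht, aux_quantile hn _ hy i t ht]

lemma aux_potential {n : ℕ} (m u : Fin n → ℝ) (hm : StrictMono m) (hu : StrictMono u) :
    ∃ f g : Fin n → ℝ, (∀ i, m i * u i = f i + g i) ∧
      ∀ i j, i ≠ j → m i * u j < f i + g j := by
  let M : ℕ → ℝ := fun k => if h : k < n then m ⟨k, h⟩ else 0
  let U : ℕ → ℝ := fun k => if h : k < n then u ⟨k, h⟩ else 0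
  have hM : ∀ i j, i < j → j < n → M i < M j := by
    intro i j h1 h2
    simp only [M, h2, h1.trans h2, dif_pos]
    exact hm (by exact h1)
  have hU : ∀ i j, i < j → j < n → U i < U j := by
    intro i j h1 h2
    simp only [U, h2, h1.trans h2, dif_pos]
    exact hu (by exact h1)
  let G : ℕ → ℝ := fun j => ∑ k ∈ Finset.range j, (M k + M (k + 1)) / 2 * (U (k + 1) - U k)
  have hG : ∀ j, G (j + 1) = G j + (M j + M (j + 1)) / 2 * (U (j + 1) - U j) := fun j =>
    Finset.sum_range_succ _ _
  have up : ∀ i j, i + 1 ≤ j → j < n → M i * (U j - U i) < G j - G i := by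
    intro i j hij
    induction j, hij using Nat.le_induction with
    | base =>
      intro h
      have := hM i (i + 1) (by omega) h
      have := hU i (i + 1) (by omega) h
      rw [hG]; nlinarith
    | succ j hj ih =>
      intro h
      have h0 := ih (by omega)
      have := hM i j (by omega) (by omega)
      have := hM j (j + 1) (by omega) h
      have := hU j (j + 1) (by omega) h
      rw [hG]; nlinarith
  have dn : ∀ i j, i + 1 ≤ j → j < n → G j - G i < M j * (U j - U i) := by
    intro i j hij
    induction j, hij using Nat.le_induction with
    | base =>
      intro h
      have := hM i (i + 1) (by omega) h
      have := hU i (i + 1) (by omega) h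
      rw [hG]; nlinarith
    | succ j hj ih =>
      intro h
      have h0 := ih (by omega)
      have h1 := hM j (j + 1) (by omega) h
      have h2 := hU j (j + 1) (by omega) h
      have h3 := hU i j (by omega) (by omega)
      rw [hG]
      nlinarith [mul_pos (sub_pos.2 h1) (sub_pos.2 h2), mul_pos (sub_pos.2 h1) (sub_pos.2 h3)]
  have eM : ∀ i : Fin n, M i = m i := fun i => by simp [M]
  have eU : ∀ i : Fin n, U i = u i := fun i => by simp [U]
  refine ⟨fun i => m i * u i - G i, fun j => G j, fun i => by ring, fun i j hij => ?_⟩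
  rcases lt_or_gt_of_ne hij with h | h
  · have := up i j h j.2
    rw [eM, eU, eU] at this
    linarith
  · have := dn j i h i.2
    rw [eM, eU, eU] at this
    linarith

lemma aux_opt {d n : ℕ} (hn : 0 < n) (a b : Fin n → Euc d)
    (ha : Function.Injective a) (hb : Function.Injective b) (φ ψ : Fin n → ℝ)
    (heq : ∀ i, φ i + ψ i = ‖a i - b i‖ ^ 2)
    (hlt : ∀ i j, i ≠ j → φ i + ψ j < ‖a i - b j‖ ^ 2) (π : Measure (Euc d × Euc d)) :
    π ∈ OptPlan (empMeasure a) (empMeasure b) ↔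
      π ∈ Coupling (empMeasure a) (empMeasure b) ∧ ∀ᵐ p ∂π, ∃ i, p = (a i, b i) := by
  let Φ : Euc d → ℝ := Function.extend a φ 0
  let Ψ : Euc d → ℝ := Function.extend b ψ 0
  have eΦ : ∀ i, Φ (a i) = φ i := fun i => ha.extend_apply _ _ _
  have eΨ : ∀ i, Ψ (b i) = ψ i := fun i => hb.extend_apply _ _ _
  let I : ℝ := ∫ z, Φ z ∂(empMeasure a) + ∫ z, Ψ z ∂(empMeasure b)
  -- support of couplings
  have supp : ∀ π ∈ Coupling (empMeasure a) (empMeasure b),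
      ∀ᵐ p ∂π, p ∈ Set.range a ×ˢ Set.range b := by
    rintro π ⟨hp, h1, h2⟩
    have k1 : ∀ᵐ p ∂π, p.1 ∈ Set.range a := by
      apply ae_of_ae_map (f := Prod.fst) (p := fun z => z ∈ Set.range a) (by fun_prop)
      rw [h1]
      exact aux_ae_sum _ _ _ fun i => ⟨i, rfl⟩
    have k2 : ∀ᵐ p ∂π, p.2 ∈ Set.range b := by
      apply ae_of_ae_map (f := Prod.snd) (p := fun z => z ∈ Set.range b) (by fun_prop)
      rw [h2]
      exact aux_ae_sum _ _ _ fun i => ⟨i, rfl⟩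
    filter_upwards [k1, k2] with p q1 q2 using ⟨q1, q2⟩
  have fin : (Set.range a ×ˢ Set.range b).Finite :=
    (Set.finite_range a).prod (Set.finite_range b)
  have integ : ∀ π ∈ Coupling (empMeasure a) (empMeasure b), ∀ f : Euc d × Euc d → ℝ,
      Integrable f π := fun π hπ f =>
    haveI := hπ.1
    aux_integrable_s13 π _ fin (supp π hπ) f
  have key : ∀ π ∈ Coupling (empMeasure a) (empMeasure b),
      ∫ p, (‖p.1 - p.2‖ ^ 2 - (Φ p.1 + Ψ p.2)) ∂π = tCost π - I := by
    intro π hπ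
    have hi := integ π hπ
    rw [integral_sub (hi _) (hi _), integral_add (hi _) (hi _)]
    have hA := aux_emp_prob hn a
    have hB := aux_emp_prob hn b
    have e1 : ∫ p, Φ p.1 ∂π = ∫ z, Φ z ∂(empMeasure a) := by
      rw [← hπ.2.1, integral_map (by fun_prop)]
      rw [hπ.2.1]
      exact (aux_integrable_s13 (empMeasure a) _ (Set.finite_range a)
        (aux_ae_sum _ _ _ fun i => ⟨i, rfl⟩) Φ).aestronglyMeasurable
    have e2 : ∫ p, Ψ p.2 ∂π = ∫ z, Ψ z ∂(empMeasure b) := by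
      rw [← hπ.2.2, integral_map (by fun_prop)]
      rw [hπ.2.2]
      exact (aux_integrable_s13 (empMeasure b) _ (Set.finite_range b)
        (aux_ae_sum _ _ _ fun i => ⟨i, rfl⟩) Ψ).aestronglyMeasurable
    rw [e1, e2]
    rfl
  have nonneg : ∀ π ∈ Coupling (empMeasure a) (empMeasure b),
      0 ≤ᵐ[π] fun p => (‖p.1 - p.2‖ ^ 2 - (Φ p.1 + Ψ p.2)) := by
    intro π hπ
    filter_upwards [supp π hπ]
    rintro ⟨_, _⟩ ⟨⟨i, rfl⟩, ⟨j, rfl⟩⟩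
    show 0 ≤ ‖a i - b j‖ ^ 2 - (Φ (a i) + Ψ (b j))
    rw [eΦ, eΨ]
    by_cases hij : i = j
    · subst hij; rw [heq]; simp
    · linarith [hlt i j hij]
  have lower : ∀ π ∈ Coupling (empMeasure a) (empMeasure b), I ≤ tCost π := by
    intro π hπ
    have := integral_nonneg_of_ae (nonneg π hπ)
    rw [key π hπ] at this
    linarith
  have charac : ∀ π ∈ Coupling (empMeasure a) (empMeasure b),
      (tCost π = I ↔ ∀ᵐ p ∂π, ∃ i, p = (a i, b i)) := by
    intro π hπ
    rw [← sub_eq_zero, ← key π hπ, integral_eq_zero_iff_of_nonneg_ae (nonneg π hπ) (integ π hπ _)]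
    constructor
    · intro h
      filter_upwards [supp π hπ, h]
      rintro ⟨_, _⟩ ⟨⟨i, rfl⟩, ⟨j, rfl⟩⟩ h0
      have h0' : ‖a i - b j‖ ^ 2 - (Φ (a i) + Ψ (b j)) = 0 := h0
      rw [eΦ, eΨ] at h0'
      by_cases hij : i = j
      · exact ⟨i, by rw [hij]⟩
      · linarith [hlt i j hij]
    · intro h
      filter_upwards [h]
      rintro _ ⟨i, rfl⟩
      show ‖a i - b i‖ ^ 2 - (Φ (a i) + Ψ (b i)) = 0
      rw [eΦ, eΨ, heq, sub_self]
  -- the diagonal plan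
  have diag : ∃ π0 ∈ Coupling (empMeasure a) (empMeasure b), tCost π0 = I := by
    have hc : (n : ℝ≥0∞)⁻¹ • ∑ i, Measure.dirac (a i, b i)
        ∈ Coupling (empMeasure a) (empMeasure b) := by
      have hn0 : (n : ℝ≥0∞) ≠ 0 := by exact_mod_cast hn.ne'
      refine ⟨⟨?_⟩, ?_, ?_⟩
      · simp [ENNReal.inv_mul_cancel hn0 (ENNReal.natCast_ne_top n)]
      · ext s hs
        simp [empMeasure, Measure.map_apply measurable_fst hs, Measure.dirac_apply' _ hs,
          Measure.dirac_apply' _ (measurable_fst hs), Set.indicator_apply]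
      · ext s hs
        simp [empMeasure, Measure.map_apply measurable_snd hs, Measure.dirac_apply' _ hs,
          Measure.dirac_apply' _ (measurable_snd hs), Set.indicator_apply]
    exact ⟨_, hc, (charac _ hc).2 (aux_ae_sum _ _ _ fun i => ⟨i, rfl⟩)⟩
  have hW : W2sq (empMeasure a) (empMeasure b) = I := by
    obtain ⟨π0, h0, h1⟩ := diag
    refine IsLeast.csInf_eq ⟨⟨π0, h0, h1⟩, ?_⟩
    rintro _ ⟨π, hπ, rfl⟩
    exact lower π hπ
  show (π ∈ Coupling _ _ ∧ tCost π = W2sq _ _) ↔ _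
  rw [hW]
  exact ⟨fun h => ⟨h.1, (charac π h.1).1 h.2⟩, fun h => ⟨h.1, (charac π h.1).2 h.2⟩⟩

lemma aux_opt_line {d n : ℕ} (hn : 0 < n) (θ : Euc d) (hθ : ‖θ‖ = 1) (m : Fin n → ℝ)
    (hm : StrictMono m) (b : Fin n → Euc d) (hb : StrictMono fun i => (⟪θ, b i⟫ : ℝ))
    (π : Measure (Euc d × Euc d)) :
    π ∈ OptPlan (empMeasure fun i => m i • θ) (empMeasure b) ↔
      π ∈ Coupling (empMeasure fun i => m i • θ) (empMeasure b) ∧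
        ∀ᵐ p ∂π, ∃ i, p = (m i • θ, b i) := by
  have hθ0 : θ ≠ 0 := by rintro rfl; simp at hθ
  obtain ⟨f, g, h1, h2⟩ := aux_potential m _ hm hb
  have hc : ∀ i j, ‖m i • θ - b j‖ ^ 2 = m i ^ 2 - 2 * (m i * ⟪θ, b j⟫) + ‖b j‖ ^ 2 := by
    intro i j
    rw [norm_sub_sq_real, norm_smul, hθ, real_inner_smul_left, mul_one, Real.norm_eq_abs, sq_abs]
  refine aux_opt hn _ b ?_ ?_ (fun i => m i ^ 2 - 2 * f i) (fun j => ‖b j‖ ^ 2 - 2 * g j) ?_ ?_ π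
  · exact fun i j h => hm.injective (smul_left_injective ℝ hθ0 h)
  · exact fun i j h => hb.injective (congrArg (fun z => (⟪θ, z⟫ : ℝ)) h)
  · intro i; rw [hc, h1]; ring
  · intro i j hij; rw [hc]; linarith [h2 i j hij]

lemma aux_main {d n : ℕ} (hn : 0 < n) (θ : Euc d) (hθ : ‖θ‖ = 1) (m : Fin n → ℝ)
    (hm : StrictMono m) (x y : Fin n → Euc d) (hx : StrictMono fun i => (⟪θ, x i⟫ : ℝ))
    (hy : StrictMono fun i => (⟪θ, y i⟫ : ℝ)) :
    Wnusq (empMeasure fun i => m i • θ) (empMeasure x) (empMeasure y)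
      = (1 / (n : ℝ)) * ∑ i, ‖x i - y i‖ ^ 2 := by
  have hθ0 : θ ≠ 0 := by rintro rfl; simp at hθ
  have hinj : Function.Injective fun i => m i • θ :=
    fun i j h => hm.injective (smul_left_injective ℝ hθ0 h)
  have hm1 : Measurable (fun p : Euc d × Euc d × Euc d => (p.1, p.2.1)) := by fun_prop
  have hm2 : Measurable (fun p : Euc d × Euc d × Euc d => (p.1, p.2.2)) := by fun_prop
  have hn0 : (n : ℝ≥0∞) ≠ 0 := by exact_mod_cast hn.ne'
  let ρ0 : Measure (Euc d × Euc d × Euc d) :=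
    (n : ℝ≥0∞)⁻¹ • ∑ i, Measure.dirac (m i • θ, x i, y i)
  have pr0 : IsProbabilityMeasure ρ0 :=
    ⟨by simp [ρ0, ENNReal.inv_mul_cancel hn0 (ENNReal.natCast_ne_top n)]⟩
  have mapρ : ∀ {F : Type} [MeasurableSpace F] (h : Euc d × Euc d × Euc d → F),
      Measurable h → ρ0.map h = (n : ℝ≥0∞)⁻¹ • ∑ i, Measure.dirac (h (m i • θ, x i, y i)) := by
    intro F _ h hh
    ext s hs
    simp [ρ0, Measure.map_apply hh hs, Measure.dirac_apply' _ hs,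
      Measure.dirac_apply' _ (hh hs), Set.indicator_apply]
  have mem0 : ρ0 ∈ Gamma (empMeasure fun i => m i • θ) (empMeasure x) (empMeasure y) := by
    refine ⟨pr0, (aux_opt_line hn θ hθ m hm x hx _).2 ⟨⟨?_, ?_, ?_⟩, ?_⟩,
      (aux_opt_line hn θ hθ m hm y hy _).2 ⟨⟨?_, ?_, ?_⟩, ?_⟩⟩
    · exact Measure.isProbabilityMeasure_map hm1.aemeasurable
    · rw [Measure.map_map measurable_fst hm1]; exact mapρ _ (measurable_fst.comp hm1)
    · rw [Measure.map_map measurable_snd hm1]; exact mapρ _ (measurable_snd.comp hm1)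
    · rw [mapρ _ hm1]; exact aux_ae_sum _ _ _ fun i => ⟨i, rfl⟩
    · exact Measure.isProbabilityMeasure_map hm2.aemeasurable
    · rw [Measure.map_map measurable_fst hm2]; exact mapρ _ (measurable_fst.comp hm2)
    · rw [Measure.map_map measurable_snd hm2]; exact mapρ _ (measurable_snd.comp hm2)
    · rw [mapρ _ hm2]; exact aux_ae_sum _ _ _ fun i => ⟨i, rfl⟩
  have cst : ∀ ρ ∈ Gamma (empMeasure fun i => m i • θ) (empMeasure x) (empMeasure y),
      pivotCost ρ = (1 / (n : ℝ)) * ∑ i, ‖x i - y i‖ ^ 2 := by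
    rintro ρ ⟨hp, h1, h2⟩
    obtain ⟨c1, s1⟩ := (aux_opt_line hn θ hθ m hm x hx _).1 h1
    obtain ⟨c2, s2⟩ := (aux_opt_line hn θ hθ m hm y hy _).1 h2
    have s1' := ae_of_ae_map hm1.aemeasurable s1
    have s2' := ae_of_ae_map hm2.aemeasurable s2
    let H : Euc d → ℝ := Function.extend (fun i => m i • θ) (fun i => ‖x i - y i‖ ^ 2) 0
    have eH : ∀ i, H (m i • θ) = ‖x i - y i‖ ^ 2 := fun i => hinj.extend_apply _ _ _
    have hfst : ρ.map Prod.fst = empMeasure fun i => m i • θ := by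
      have := c1.2.1
      rwa [Measure.map_map measurable_fst hm1] at this
    have hA := aux_emp_prob hn (fun i => m i • θ)
    have e1 : pivotCost ρ = ∫ p, H p.1 ∂ρ := by
      refine integral_congr_ae ?_
      filter_upwards [s1', s2']
      rintro ⟨p, q, r⟩ ⟨i, hi⟩ ⟨j, hj⟩
      simp only [Prod.mk.injEq] at hi hj
      obtain ⟨rfl, rfl⟩ := hi
      obtain ⟨hij, rfl⟩ := hj
      have : i = j := hinj hij
      subst this
      exact (eH i).symm
    have e2 : ∫ p, H p.1 ∂ρ = ∫ z, H z ∂(empMeasure fun i => m i • θ) := by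
      rw [← hfst, integral_map (by fun_prop)]
      rw [hfst]
      exact (aux_integrable_s13 (empMeasure fun i => m i • θ) _ (Set.finite_range fun i => m i • θ)
        (aux_ae_sum _ _ _ fun i => ⟨i, rfl⟩) H).aestronglyMeasurable
    rw [e1, e2]
    refine (aux_integral _ H).trans ?_
    simp only [eH]
  refine IsLeast.csInf_eq ⟨⟨ρ0, mem0, cst _ mem0⟩, ?_⟩
  rintro _ ⟨ρ, hρ, rfl⟩
  exact (cst ρ hρ).ge

/-- for point clouds with injective projections, `PS_θ²` is given by the
sorting permutations. -/
theorem PSsq_point_clouds_nonambiguous {d n : ℕ} (hn : 0 < n)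
    (x y : Fin n → Euc d) (θ : Euc d) (hθ : ‖θ‖ = 1)
    (hx : Function.Injective fun i => (⟪θ, x i⟫ : ℝ))
    (hy : Function.Injective fun i => (⟪θ, y i⟫ : ℝ))
    (σ τ : Equiv.Perm (Fin n))
    (hσ : StrictMono fun i => (⟪θ, x (σ i)⟫ : ℝ))
    (hτ : StrictMono fun i => (⟪θ, y (τ i)⟫ : ℝ)) :
    PSsq θ (empMeasure x) (empMeasure y)
      = (1 / (n : ℝ)) * ∑ i, ‖x (σ i) - y (τ i)‖ ^ 2 := by
  unfold PSsq
  rw [← aux_emp_perm x σ, ← aux_emp_perm y τ, aux_pivot hn θ _ _ hσ hτ]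
  refine aux_main hn θ hθ _ ?_ _ _ hσ hτ
  intro i j hij
  have h1 := hσ hij
  have h2 := hτ hij
  simp only at h1 h2 ⊢
  linarith

end
end
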